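/- arXiv:2208.07984 — 2 statements merged into one kernel-verified Lean document; each statement's English description precedes it below -/
import Mathlib

section
/- Let N(μ,Σ) and N(μ̃,Σ̃) be d-dimensional Gaussians with dTV(N(μ,Σ), N(μ̃,Σ̃)) ≤ γ for some γ < 1, where Σ and Σ̃ are positive definite. Then ((1-γ)⁴/4)·Σ̃ ⪯ Σ ⪯ (4/(1-γ)⁴)·Σ̃ and (μ-μ̃)(μ-μ̃)ᵀ ⪯ (8γ/(1-γ))·(Σ + Σ̃). -/
open Real MeasureTheory Matrix ProbabilityTheory

/-- The `d`-dimensional Gaussian measure `N(μ, S)`, given by its Lebesgue density. -/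
noncomputable def mvGaussian (d : ℕ) (μ : Fin d → ℝ) (S : Matrix (Fin d) (Fin d) ℝ) :
    Measure (Fin d → ℝ) :=
  volume.withDensity fun x => ENNReal.ofReal
    ((1 / Real.sqrt ((2 * π) ^ d * S.det)) *
      Real.exp (-(1 / 2) * ((fun i => x i - μ i) ⬝ᵥ (S⁻¹ *ᵥ fun i => x i - μ i))))

/-- Loewner (positive semidefinite) order on matrices: `A ⪯ B`. -/
def loewnerLE {d : ℕ} (A B : Matrix (Fin d) (Fin d) ℝ) : Prop := (B - A).PosSemidef

/-- Total variation distance between two measures. -/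
noncomputable def tvDist {α : Type*} [MeasurableSpace α] (P Q : Measure α) : ℝ :=
  ⨆ s : {s : Set α // MeasurableSet s}, |(P s.1).toReal - (Q s.1).toReal|

/-!
Total variation does not increase under the linear projections `x ↦ v ⬝ᵥ x`, and the projection of
`N(μ, S)` is the real Gaussian `N(v ⬝ᵥ μ, v ⬝ᵥ S *ᵥ v)`; since both Loewner inequalities are
statements about quadratic forms in `v`, everything reduces to dimension one. There, two
distributions with densities `f` and `g` satisfy `1 - TV = ∫ min f g ≤ ∫ √(f g)`, and for two
Gaussians the last integral is explicit because the geometric mean of two Gaussian densities is a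
multiple of a Gaussian density.
-/

open scoped NNReal ENNReal

section TotalVariation

variable {α β : Type*} [MeasurableSpace α] [MeasurableSpace β]

lemma tvDist_comm (P Q : Measure α) : tvDist P Q = tvDist Q P := by
  simp only [tvDist, abs_sub_comm]

lemma tvDist_nonneg (P Q : Measure α) : 0 ≤ tvDist P Q :=
  Real.iSup_nonneg fun _ => abs_nonneg _

lemma abs_measureReal_sub_le_tvDist (P Q : Measure α) [IsFiniteMeasure P] [IsFiniteMeasure Q]
    {s : Set α} (hs : MeasurableSet s) : |P.real s - Q.real s| ≤ tvDist P Q := by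
  refine le_ciSup (f := fun t : {t : Set α // MeasurableSet t} => |P.real t.1 - Q.real t.1|)
    ⟨max (P.real .univ) (Q.real .univ), ?_⟩ ⟨s, hs⟩
  rintro _ ⟨t, rfl⟩
  exact abs_sub_le_of_nonneg_of_le measureReal_nonneg
    (le_max_of_le_left (measureReal_mono (Set.subset_univ _))) measureReal_nonneg
    (le_max_of_le_right (measureReal_mono (Set.subset_univ _)))

lemma tvDist_map_le (P Q : Measure α) [IsFiniteMeasure P] [IsFiniteMeasure Q] {f : α → β}
    (hf : Measurable f) : tvDist (P.map f) (Q.map f) ≤ tvDist P Q := by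
  have : Nonempty {s : Set β // MeasurableSet s} := ⟨⟨∅, .empty⟩⟩
  refine ciSup_le fun s => ?_
  rw [Measure.map_apply hf s.2, Measure.map_apply hf s.2]
  exact abs_measureReal_sub_le_tvDist P Q (hf s.2)

/-- The Bhattacharyya coefficient (Hellinger affinity) `∫ √(f g) dm` of the distributions with
densities `f` and `g` with respect to `m`. It bounds their total variation distance away from `1`.
Densities are taken real-valued. -/
noncomputable def bhattacharyyaCoeff (m : Measure α) (f g : α → ℝ) : ℝ :=
  ∫ x, √(f x * g x) ∂m

lemma min_le_sqrt_mul {a b : ℝ} (ha : 0 ≤ a) (hb : 0 ≤ b) : min a b ≤ √(a * b) := by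
  refine Real.le_sqrt_of_sq_le ?_
  rw [sq]
  exact mul_le_mul (min_le_left a b) (min_le_right a b) (le_min ha hb) ha

lemma integrable_sqrt_mul {m : Measure α} {f g : α → ℝ} (hf : Integrable f m)
    (hg : Integrable g m) : Integrable (fun x => √(f x * g x)) m := by
  refine (hf.abs.add hg.abs).mono'
    (Real.continuous_sqrt.comp_aestronglyMeasurable (hf.1.mul hg.1)) (.of_forall fun x => ?_)
  rw [Real.norm_of_nonneg (Real.sqrt_nonneg _)]
  refine Real.sqrt_le_iff.2 ⟨add_nonneg (abs_nonneg _) (abs_nonneg _), ?_⟩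
  calc f x * g x ≤ |f x| * |g x| := (le_abs_self _).trans_eq (abs_mul _ _)
    _ ≤ (|f x| + |g x|) ^ 2 := by nlinarith [abs_nonneg (f x), abs_nonneg (g x)]

lemma measureReal_withDensity_ofReal {m : Measure α} {f : α → ℝ} (hf : Integrable f m)
    (hf₀ : 0 ≤ f) {s : Set α} (hs : MeasurableSet s) :
    (m.withDensity fun x => .ofReal (f x)).real s = ∫ x in s, f x ∂m := by
  rw [measureReal_def, withDensity_apply _ hs,
    integral_eq_lintegral_of_nonneg_ae (.of_forall hf₀) hf.1.restrict]

lemma integral_sub_tvDist_le_integral_min {m : Measure α} {f g : α → ℝ} (hfm : Measurable f)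
    (hgm : Measurable g) (hf : Integrable f m) (hg : Integrable g m) (hf₀ : 0 ≤ f) (hg₀ : 0 ≤ g) :
    ∫ x, f x ∂m -
        tvDist (m.withDensity fun x => .ofReal (f x)) (m.withDensity fun x => .ofReal (g x)) ≤
      ∫ x, min (f x) (g x) ∂m := by
  have hs : MeasurableSet {x | g x ≤ f x} := measurableSet_le hgm hfm
  have := isFiniteMeasure_withDensity_ofReal hf.2
  have := isFiniteMeasure_withDensity_ofReal hg.2
  have h_tv := (le_abs_self _).trans (abs_measureReal_sub_le_tvDist
    (m.withDensity fun x => .ofReal (f x)) (m.withDensity fun x => .ofReal (g x)) hs)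
  rw [measureReal_withDensity_ofReal hf hf₀ hs, measureReal_withDensity_ofReal hg hg₀ hs] at h_tv
  have h_mem : ∫ x in {x | g x ≤ f x}, min (f x) (g x) ∂m = ∫ x in {x | g x ≤ f x}, g x ∂m :=
    setIntegral_congr_fun hs fun _ hx => min_eq_right hx
  have h_compl : ∫ x in {x | g x ≤ f x}ᶜ, min (f x) (g x) ∂m = ∫ x in {x | g x ≤ f x}ᶜ, f x ∂m :=
    setIntegral_congr_fun hs.compl fun _ hx => min_eq_left (le_of_not_ge hx)
  have h_split := integral_add_compl hs (hf.inf hg)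
  simp only [Pi.inf_apply] at h_split
  rw [← integral_add_compl hs hf, ← h_split, h_mem, h_compl]
  linarith

lemma integral_sub_tvDist_le_bhattacharyyaCoeff {m : Measure α} {f g : α → ℝ} (hfm : Measurable f)
    (hgm : Measurable g) (hf : Integrable f m) (hg : Integrable g m) (hf₀ : 0 ≤ f) (hg₀ : 0 ≤ g) :
    ∫ x, f x ∂m -
        tvDist (m.withDensity fun x => .ofReal (f x)) (m.withDensity fun x => .ofReal (g x)) ≤
      bhattacharyyaCoeff m f g :=
  (integral_sub_tvDist_le_integral_min hfm hgm hf hg hf₀ hg₀).trans <|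
    integral_mono (hf.inf hg) (integrable_sqrt_mul hf hg) fun x => min_le_sqrt_mul (hf₀ x) (hg₀ x)

end TotalVariation

section RealGaussian

variable {v₁ v₂ : ℝ≥0}

lemma gaussianPDFReal_mul_gaussianPDFReal (m₁ m₂ : ℝ) (hv₁ : v₁ ≠ 0) (hv₂ : v₂ ≠ 0) (x : ℝ) :
    gaussianPDFReal m₁ v₁ x * gaussianPDFReal m₂ v₂ x =
      2 * √(v₁ * v₂) / (v₁ + v₂) * (rexp (-(m₁ - m₂) ^ 2 / (4 * (v₁ + v₂))) *
        gaussianPDFReal ((m₁ * v₂ + m₂ * v₁) / (v₁ + v₂)) (2 * v₁ * v₂ / (v₁ + v₂)) x) ^ 2 := by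
  have h_const : (√(2 * π * v₁))⁻¹ * (√(2 * π * v₂))⁻¹ =
      2 * √(v₁ * v₂) / (v₁ + v₂) * (√(2 * π * (2 * v₁ * v₂ / (v₁ + v₂))))⁻¹ ^ 2 := by
    rw [inv_pow, Real.sq_sqrt (by positivity), ← mul_inv, ← Real.sqrt_mul (by positivity),
      show 2 * π * v₁ * (2 * π * v₂) = (2 * π) ^ 2 * (v₁ * v₂) by ring,
      Real.sqrt_mul (by positivity), Real.sqrt_sq (by positivity)]
    field_simp
    rw [Real.sq_sqrt (by positivity)]
  have h_exp : -(x - m₁) ^ 2 / (2 * v₁) + -(x - m₂) ^ 2 / (2 * v₂) =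
      (2 : ℕ) * (-(m₁ - m₂) ^ 2 / (4 * (v₁ + v₂)) +
        -(x - (m₁ * v₂ + m₂ * v₁) / (v₁ + v₂)) ^ 2 / (2 * (2 * v₁ * v₂ / (v₁ + v₂)))) := by
    push_cast
    field_simp
    ring
  simp only [gaussianPDFReal, NNReal.coe_div, NNReal.coe_mul, NNReal.coe_add, NNReal.coe_ofNat]
  rw [mul_mul_mul_comm, ← Real.exp_add, h_exp, h_const, Real.exp_nat_mul, Real.exp_add]
  ring

lemma sqrt_gaussianPDFReal_mul_gaussianPDFReal (m₁ m₂ : ℝ) (hv₁ : v₁ ≠ 0) (hv₂ : v₂ ≠ 0) (x : ℝ) :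
    √(gaussianPDFReal m₁ v₁ x * gaussianPDFReal m₂ v₂ x) =
      √(2 * √(v₁ * v₂) / (v₁ + v₂)) * rexp (-(m₁ - m₂) ^ 2 / (4 * (v₁ + v₂))) *
        gaussianPDFReal ((m₁ * v₂ + m₂ * v₁) / (v₁ + v₂)) (2 * v₁ * v₂ / (v₁ + v₂)) x := by
  rw [gaussianPDFReal_mul_gaussianPDFReal m₁ m₂ hv₁ hv₂, Real.sqrt_mul (by positivity),
    Real.sqrt_sq (mul_nonneg (Real.exp_nonneg _) (gaussianPDFReal_nonneg _ _ _)), ← mul_assoc]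

lemma bhattacharyyaCoeff_gaussianPDFReal (m₁ m₂ : ℝ) (hv₁ : v₁ ≠ 0) (hv₂ : v₂ ≠ 0) :
    bhattacharyyaCoeff volume (gaussianPDFReal m₁ v₁) (gaussianPDFReal m₂ v₂) =
      √(2 * √(v₁ * v₂) / (v₁ + v₂)) * rexp (-(m₁ - m₂) ^ 2 / (4 * (v₁ + v₂))) := by
  have hv : 2 * v₁ * v₂ / (v₁ + v₂) ≠ 0 := by positivity
  simp only [bhattacharyyaCoeff, sqrt_gaussianPDFReal_mul_gaussianPDFReal m₁ m₂ hv₁ hv₂,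
    integral_const_mul, integral_gaussianPDFReal_eq_one _ hv, mul_one]

lemma one_sub_tvDist_gaussianReal_le (m₁ m₂ : ℝ) (hv₁ : v₁ ≠ 0) (hv₂ : v₂ ≠ 0) :
    1 - tvDist (gaussianReal m₁ v₁) (gaussianReal m₂ v₂) ≤
      √(2 * √(v₁ * v₂) / (v₁ + v₂)) * rexp (-(m₁ - m₂) ^ 2 / (4 * (v₁ + v₂))) := by
  rw [gaussianReal_of_var_ne_zero m₁ hv₁, gaussianReal_of_var_ne_zero m₂ hv₂,
    ← bhattacharyyaCoeff_gaussianPDFReal m₁ m₂ hv₁ hv₂, ← integral_gaussianPDFReal_eq_one m₁ hv₁]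
  exact integral_sub_tvDist_le_bhattacharyyaCoeff (measurable_gaussianPDFReal m₁ v₁)
    (measurable_gaussianPDFReal m₂ v₂) (integrable_gaussianPDFReal m₁ v₁)
    (integrable_gaussianPDFReal m₂ v₂) (gaussianPDFReal_nonneg m₁ v₁)
    (gaussianPDFReal_nonneg m₂ v₂)

variable {m₁ m₂ γ : ℝ}

lemma mul_variance_le_variance_of_tvDist_le (hv₁ : v₁ ≠ 0) (hv₂ : v₂ ≠ 0) (hγ : γ < 1)
    (htv : tvDist (gaussianReal m₁ v₁) (gaussianReal m₂ v₂) ≤ γ) :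
    (1 - γ) ^ 4 / 4 * v₂ ≤ v₁ := by
  have h₁ : (0 : ℝ) < v₁ := by positivity
  have h_exp : rexp (-(m₁ - m₂) ^ 2 / (4 * (v₁ + v₂))) ≤ 1 :=
    Real.exp_le_one_iff.2 <| div_nonpos_of_nonpos_of_nonneg (neg_nonpos.2 (sq_nonneg _))
      (by positivity)
  have h_root : 1 - γ ≤ √(2 * √(v₁ * v₂) / (v₁ + v₂)) := calc
    1 - γ ≤ _ := (sub_le_sub_left htv 1).trans (one_sub_tvDist_gaussianReal_le m₁ m₂ hv₁ hv₂)
    _ ≤ _ := mul_le_of_le_one_right (Real.sqrt_nonneg _) h_exp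
  calc (1 - γ) ^ 4 / 4 * (v₂ : ℝ) ≤ √(2 * √(v₁ * v₂) / (v₁ + v₂)) ^ 4 / 4 * v₂ := by
        gcongr
    _ = v₁ * ((v₂ : ℝ) / (v₁ + v₂)) ^ 2 := by
        rw [show 4 = 2 * 2 from rfl, pow_mul, Real.sq_sqrt (by positivity), div_pow, mul_pow,
          Real.sq_sqrt (by positivity)]
        field_simp
        ring
    _ ≤ v₁ := by
        refine mul_le_of_le_one_right h₁.le (pow_le_one₀ (by positivity) ?_)
        exact div_le_one_of_le₀ (by linarith) (by positivity)

lemma sq_sub_le_mul_variance_add_of_tvDist_le (hv₁ : v₁ ≠ 0) (hv₂ : v₂ ≠ 0) (hγ : γ < 1)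
    (htv : tvDist (gaussianReal m₁ v₁) (gaussianReal m₂ v₂) ≤ γ) :
    (m₁ - m₂) ^ 2 ≤ 4 * γ / (1 - γ) * (v₁ + v₂) := by
  have h₁ : (0 : ℝ) < v₁ := by positivity
  have h₂ : (0 : ℝ) < v₂ := by positivity
  have hγ' : 0 < 1 - γ := sub_pos.2 hγ
  set y : ℝ := (m₁ - m₂) ^ 2 / (4 * (v₁ + v₂)) with hy
  have h_coeff : √(2 * √(v₁ * v₂) / (v₁ + v₂)) ≤ 1 := by
    refine Real.sqrt_le_one.2 (div_le_one_of_le₀ ?_ (by positivity))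
    rw [Real.sqrt_mul h₁.le]
    nlinarith [sq_nonneg (√(v₁ : ℝ) - √v₂), Real.sq_sqrt h₁.le, Real.sq_sqrt h₂.le]
  have h_exp : 1 - γ ≤ rexp (-y) := calc
    1 - γ ≤ _ := (sub_le_sub_left htv 1).trans (one_sub_tvDist_gaussianReal_le m₁ m₂ hv₁ hv₂)
    _ ≤ rexp (-(m₁ - m₂) ^ 2 / (4 * (v₁ + v₂))) := mul_le_of_le_one_left (Real.exp_nonneg _) h_coeff
    _ = rexp (-y) := by rw [hy, neg_div]
  have h_lin : y ≤ γ / (1 - γ) := calc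
    y ≤ rexp y - 1 := le_sub_right_of_add_le (Real.add_one_le_exp y)
    _ ≤ (1 - γ)⁻¹ - 1 := by
        rw [← neg_neg y, Real.exp_neg]
        gcongr
    _ = γ / (1 - γ) := by field_simp; ring
  rw [hy, div_le_iff₀ (by positivity)] at h_lin
  linarith [show γ / (1 - γ) * (4 * (v₁ + v₂ : ℝ)) = 4 * γ / (1 - γ) * (v₁ + v₂) by ring]

end RealGaussian

section Density

lemma map_withDensity_comp {α β : Type*} [MeasurableSpace α] [MeasurableSpace β] (m : Measure α)
    {T : α → β} (hT : Measurable T) {q : β → ℝ≥0∞} (hq : Measurable q) :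
    (m.withDensity (q ∘ T)).map T = (m.map T).withDensity q := by
  ext s hs
  rw [Measure.map_apply hT hs, withDensity_apply _ (hT hs), withDensity_apply _ hs,
    setLIntegral_map hs hq hT]
  rfl

lemma pi_withDensity_ofReal {ι : Type*} [Fintype ι] {E : ι → Type*} [∀ i, MeasurableSpace (E i)]
    (m : ∀ i, Measure (E i)) [∀ i, SigmaFinite (m i)] {f : ∀ i, E i → ℝ}
    (hf : ∀ i, Integrable (f i) (m i)) (hf₀ : ∀ i, 0 ≤ f i) :
    Measure.pi (fun i => (m i).withDensity fun x => .ofReal (f i x)) =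
      (Measure.pi m).withDensity fun x => .ofReal (∏ i, f i (x i)) := by
  have (i : ι) := isFiniteMeasure_withDensity_ofReal (hf i).2
  refine Measure.pi_eq fun s hs => ?_
  rw [withDensity_apply _ (.univ_pi hs), Measure.restrict_pi_pi,
    ← ofReal_integral_eq_lintegral_ofReal (.fintype_prod_dep fun i => (hf i).restrict)
      (.of_forall fun x => Finset.prod_nonneg fun i _ => hf₀ i (x i)),
    integral_fintype_prod_eq_prod,
    ENNReal.ofReal_prod_of_nonneg fun i _ => integral_nonneg (hf₀ i)]
  refine Finset.prod_congr rfl fun i _ => ?_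
  rw [withDensity_apply _ (hs i),
    ofReal_integral_eq_lintegral_ofReal (hf i).restrict (.of_forall (hf₀ i))]

end Density

section MvGaussian

variable {d : ℕ}

/-- The Lebesgue density of `mvGaussian d μ S`, real-valued. -/
noncomputable def mvGaussianPDFReal (μ : Fin d → ℝ) (S : Matrix (Fin d) (Fin d) ℝ)
    (x : Fin d → ℝ) : ℝ :=
  1 / √((2 * π) ^ d * S.det) * rexp (-(1 / 2) * ((x - μ) ⬝ᵥ (S⁻¹ *ᵥ (x - μ))))

lemma mvGaussian_eq_withDensity (μ : Fin d → ℝ) (S : Matrix (Fin d) (Fin d) ℝ) :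
    mvGaussian d μ S = volume.withDensity fun x => .ofReal (mvGaussianPDFReal μ S x) :=
  rfl

lemma measurable_mvGaussianPDFReal (μ : Fin d → ℝ) (S : Matrix (Fin d) (Fin d) ℝ) :
    Measurable (mvGaussianPDFReal μ S) := by
  refine Continuous.measurable ?_
  unfold mvGaussianPDFReal dotProduct mulVec
  fun_prop

lemma mvGaussianPDFReal_zero_one (x : Fin d → ℝ) :
    mvGaussianPDFReal 0 1 x = ∏ i, gaussianPDFReal 0 1 (x i) := by
  have h_norm : √((2 * π) ^ d) = √(2 * π) ^ d := by
    rw [Real.sqrt_eq_iff_mul_self_eq (by positivity) (by positivity), ← mul_pow,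
      Real.mul_self_sqrt (by positivity)]
  have h_quad : -2⁻¹ * (x ⬝ᵥ x) = ∑ i, -x i ^ 2 / 2 := by
    rw [dotProduct, Finset.mul_sum]
    exact Finset.sum_congr rfl fun i _ => by ring
  simp only [mvGaussianPDFReal, gaussianPDFReal, sub_zero, inv_one, one_mulVec, det_one, mul_one,
    NNReal.coe_one, one_div, Finset.prod_mul_distrib, Finset.prod_const, Finset.card_univ,
    Fintype.card_fin, ← Real.exp_sum, inv_pow]
  rw [h_norm, ← one_div, h_quad]

lemma mvGaussian_zero_one : mvGaussian d 0 1 = Measure.pi fun _ => gaussianReal 0 1 := by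
  simp only [gaussianReal_of_var_ne_zero 0 one_ne_zero, gaussianPDF_def]
  rw [pi_withDensity_ofReal (fun _ : Fin d => volume) (fun _ => integrable_gaussianPDFReal 0 1)
    fun _ => gaussianPDFReal_nonneg 0 1]
  simp only [mvGaussian_eq_withDensity, mvGaussianPDFReal_zero_one, volume_pi]

lemma mvGaussianPDFReal_eq_abs_det_mul (b μ : Fin d → ℝ) {A : Matrix (Fin d) (Fin d) ℝ}
    (hA : IsUnit A.det) (S : Matrix (Fin d) (Fin d) ℝ) (x : Fin d → ℝ) :
    mvGaussianPDFReal μ S x =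
      |A.det| * mvGaussianPDFReal (b + A *ᵥ μ) (A * S * Aᵀ) (b + A *ᵥ x) := by
  have h_quad : (A *ᵥ (x - μ)) ⬝ᵥ ((A * S * Aᵀ)⁻¹ *ᵥ (A *ᵥ (x - μ))) =
      (x - μ) ⬝ᵥ (S⁻¹ *ᵥ (x - μ)) := by
    rw [Matrix.mul_inv_rev, Matrix.mul_inv_rev, mulVec_mulVec, Matrix.mul_assoc, Matrix.mul_assoc,
      nonsing_inv_mul A hA, Matrix.mul_one, ← mulVec_mulVec, ← vecMul_transpose,
      ← dotProduct_mulVec, mulVec_mulVec, mul_nonsing_inv Aᵀ (by rwa [det_transpose]), one_mulVec]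
  have h_norm : √((2 * π) ^ d * (A * S * Aᵀ).det) = |A.det| * √((2 * π) ^ d * S.det) := by
    rw [det_mul, det_mul, det_transpose, ← Real.sqrt_sq_eq_abs, ← Real.sqrt_mul (sq_nonneg _)]
    ring_nf
  have h_det : |A.det| ≠ 0 := abs_ne_zero.2 hA.ne_zero
  rw [mvGaussianPDFReal, mvGaussianPDFReal, add_sub_add_left_eq_sub, ← mulVec_sub, h_quad, h_norm]
  field_simp

lemma map_affine_volume_pi {ι : Type*} [Fintype ι] [DecidableEq ι] (b : ι → ℝ)
    {A : Matrix ι ι ℝ} (hA : A.det ≠ 0) :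
    (volume : Measure (ι → ℝ)).map (fun x => b + A *ᵥ x) =
      ENNReal.ofReal |A.det⁻¹| • volume := by
  have hA_meas : Measurable (toLin' A) := (toLin' A).continuous_of_finiteDimensional.measurable
  rw [show (fun x => b + A *ᵥ x) = (b + ·) ∘ toLin' A from rfl,
    ← Measure.map_map (measurable_const_add b) hA_meas,
    Real.map_matrix_volume_pi_eq_smul_volume_pi hA, Measure.map_smul, map_add_left_eq_self]

lemma map_affine_mvGaussian (b μ : Fin d → ℝ) {A : Matrix (Fin d) (Fin d) ℝ} (hA : IsUnit A.det)
    (S : Matrix (Fin d) (Fin d) ℝ) :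
    (mvGaussian d μ S).map (fun x => b + A *ᵥ x) =
      mvGaussian d (b + A *ᵥ μ) (A * S * Aᵀ) := by
  set q : (Fin d → ℝ) → ℝ≥0∞ := fun y => .ofReal (mvGaussianPDFReal (b + A *ᵥ μ) (A * S * Aᵀ) y)
  have hq : Measurable q := (measurable_mvGaussianPDFReal _ _).ennreal_ofReal
  have hT : Measurable fun x : Fin d → ℝ => b + A *ᵥ x :=
    Continuous.measurable (by fun_prop)
  have h_density : (fun x => ENNReal.ofReal (mvGaussianPDFReal μ S x)) =
      ENNReal.ofReal |A.det| • q ∘ fun x => b + A *ᵥ x := by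
    ext x
    rw [mvGaussianPDFReal_eq_abs_det_mul b μ hA, ENNReal.ofReal_mul (abs_nonneg _)]
    rfl
  rw [mvGaussian_eq_withDensity, h_density, withDensity_smul _ (hq.comp hT), Measure.map_smul,
    map_withDensity_comp _ hT hq, map_affine_volume_pi b hA.ne_zero, withDensity_smul_measure,
    smul_smul, ← ENNReal.ofReal_mul (abs_nonneg _), ← abs_mul, mul_inv_cancel₀ hA.ne_zero, abs_one,
    ENNReal.ofReal_one, one_smul, mvGaussian_eq_withDensity]

open scoped MatrixOrder in
lemma mvGaussian_eq_map_multivariateGaussian (μ : Fin d → ℝ) {S : Matrix (Fin d) (Fin d) ℝ}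
    (hS : S.PosDef) :
    mvGaussian d μ S = (multivariateGaussian (WithLp.toLp 2 μ) S).map WithLp.ofLp := by
  have h_sq : CFC.sqrt S * CFC.sqrt S = S := CFC.sqrt_mul_sqrt_self S hS.posSemidef.nonneg
  have h_symm : (CFC.sqrt S)ᵀ = CFC.sqrt S := by
    rw [← conjTranspose_eq_transpose_of_trivial]
    exact (CFC.sqrt_nonneg S).posSemidef.isHermitian.eq
  have h_unit : IsUnit (CFC.sqrt S).det := by
    refine isUnit_of_mul_isUnit_left (y := (CFC.sqrt S).det) ?_
    rw [← det_mul, h_sq]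
    exact hS.det_pos.ne'.isUnit
  have h_std : mvGaussian d 0 1 = (stdGaussian (EuclideanSpace ℝ (Fin d))).map WithLp.ofLp := by
    rw [← map_pi_eq_stdGaussian, Measure.map_map (by fun_prop) (by fun_prop), mvGaussian_zero_one]
    exact Measure.map_id.symm
  calc mvGaussian d μ S = (mvGaussian d 0 1).map (fun x => μ + CFC.sqrt S *ᵥ x) := by
        rw [map_affine_mvGaussian μ 0 h_unit, mulVec_zero, add_zero, Matrix.mul_one, h_symm, h_sq]
    _ = (multivariateGaussian (WithLp.toLp 2 μ) S).map WithLp.ofLp := by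
        rw [h_std, multivariateGaussian, Measure.map_map (Continuous.measurable (by fun_prop))
          (by fun_prop), Measure.map_map (by fun_prop) (by fun_prop)]
        rfl

lemma isProbabilityMeasure_mvGaussian (μ : Fin d → ℝ) {S : Matrix (Fin d) (Fin d) ℝ}
    (hS : S.PosDef) : IsProbabilityMeasure (mvGaussian d μ S) := by
  rw [mvGaussian_eq_map_multivariateGaussian μ hS]
  exact Measure.isProbabilityMeasure_map (by fun_prop)

lemma measurable_dotProduct_left {ι : Type*} [Fintype ι] (v : ι → ℝ) :
    Measurable fun x : ι → ℝ => v ⬝ᵥ x := by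
  unfold dotProduct
  fun_prop

lemma map_dotProduct_mvGaussian (μ : Fin d → ℝ) {S : Matrix (Fin d) (Fin d) ℝ} (hS : S.PosDef)
    (v : Fin d → ℝ) :
    (mvGaussian d μ S).map (v ⬝ᵥ ·) = gaussianReal (v ⬝ᵥ μ) (v ⬝ᵥ S *ᵥ v).toNNReal := by
  set P := multivariateGaussian (WithLp.toLp 2 μ) S
  set L : StrongDual ℝ (EuclideanSpace ℝ (Fin d)) := innerSL ℝ (WithLp.toLp 2 v)
  have hL : (v ⬝ᵥ ·) ∘ WithLp.ofLp = L := by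
    ext x
    simp [L, PiLp.inner_apply, dotProduct, mul_comm]
  have h_mean : P[L] = v ⬝ᵥ μ := by
    rw [ContinuousLinearMap.integral_comp_id_comm IsGaussian.integrable_id,
      integral_id_multivariateGaussian, ← hL]
    rfl
  have h_var : Var[L; P] = v ⬝ᵥ S *ᵥ v := by
    have := covarianceBilin_multivariateGaussian (μ := WithLp.toLp 2 μ) hS.posSemidef
      (WithLp.toLp 2 v) (WithLp.toLp 2 v)
    rw [covarianceBilin_self IsGaussian.memLp_two_id] at this
    exact this
  rw [mvGaussian_eq_map_multivariateGaussian μ hS,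
    Measure.map_map (measurable_dotProduct_left v) (by fun_prop), hL,
    IsGaussian.map_eq_gaussianReal, h_mean, h_var]

end MvGaussian

section Loewner

variable {d : ℕ} {A B : Matrix (Fin d) (Fin d) ℝ}

lemma loewnerLE_iff_dotProduct_mulVec_le (hA : A.IsHermitian) (hB : B.IsHermitian) :
    loewnerLE A B ↔ ∀ v, v ⬝ᵥ A *ᵥ v ≤ v ⬝ᵥ B *ᵥ v := by
  simp only [loewnerLE, posSemidef_iff_dotProduct_mulVec, and_iff_right (hB.sub hA), star_trivial,
    sub_mulVec, dotProduct_sub, sub_nonneg]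

lemma loewnerLE_inv_smul_of_smul_loewnerLE {c : ℝ} (hc : 0 < c) (h : loewnerLE (c • A) B) :
    loewnerLE A (c⁻¹ • B) := by
  have := PosSemidef.smul h (inv_nonneg.2 hc.le)
  rwa [smul_sub, inv_smul_smul₀ hc.ne'] at this

lemma loewnerLE_smul_of_le {a b : ℝ} (hab : a ≤ b) (hB : B.PosSemidef)
    (h : loewnerLE A (a • B)) : loewnerLE A (b • B) := by
  have := PosSemidef.add h (hB.smul (sub_nonneg.2 hab))
  rwa [sub_smul, sub_add_sub_cancel', ← loewnerLE] at this

lemma isHermitian_vecMulVec_self {ι R : Type*} [CommSemiring R] [StarRing R] [TrivialStar R]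
    (v : ι → R) : (vecMulVec v v).IsHermitian := by
  rw [IsHermitian, conjTranspose_vecMulVec, star_trivial]

lemma dotProduct_vecMulVec_self_mulVec {ι R : Type*} [Fintype ι] [CommSemiring R] (u v : ι → R) :
    v ⬝ᵥ vecMulVec u u *ᵥ v = (v ⬝ᵥ u) ^ 2 := by
  rw [vecMulVec_mulVec, op_smul_eq_smul, dotProduct_smul, smul_eq_mul, dotProduct_comm u v, sq]

end Loewner

section GaussianBounds

variable {d : ℕ} {μ μt : Fin d → ℝ} {S St : Matrix (Fin d) (Fin d) ℝ} {γ : ℝ}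

lemma toNNReal_dotProduct_mulVec_ne_zero (hS : S.PosDef) {v : Fin d → ℝ} (hv : v ≠ 0) :
    (v ⬝ᵥ S *ᵥ v).toNNReal ≠ 0 :=
  (Real.toNNReal_pos.2 (hS.dotProduct_mulVec_pos hv)).ne'

lemma coe_toNNReal_dotProduct_mulVec (hS : S.PosSemidef) (v : Fin d → ℝ) :
    ((v ⬝ᵥ S *ᵥ v).toNNReal : ℝ) = v ⬝ᵥ S *ᵥ v :=
  Real.coe_toNNReal _ (hS.dotProduct_mulVec_nonneg v)

lemma tvDist_gaussianReal_dotProduct_le (μ μt : Fin d → ℝ) (hS : S.PosDef) (hSt : St.PosDef)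
    (v : Fin d → ℝ) :
    tvDist (gaussianReal (v ⬝ᵥ μ) (v ⬝ᵥ S *ᵥ v).toNNReal)
        (gaussianReal (v ⬝ᵥ μt) (v ⬝ᵥ St *ᵥ v).toNNReal) ≤
      tvDist (mvGaussian d μ S) (mvGaussian d μt St) := by
  have := isProbabilityMeasure_mvGaussian μ hS
  have := isProbabilityMeasure_mvGaussian μt hSt
  rw [← map_dotProduct_mvGaussian μ hS, ← map_dotProduct_mvGaussian μt hSt]
  exact tvDist_map_le _ _ (measurable_dotProduct_left v)

lemma loewnerLE_covariance_of_tvDist_le (hS : S.PosDef) (hSt : St.PosDef) (hγ : γ < 1)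
    (htv : tvDist (mvGaussian d μ S) (mvGaussian d μt St) ≤ γ) :
    loewnerLE (((1 - γ) ^ 4 / 4) • St) S := by
  rw [loewnerLE_iff_dotProduct_mulVec_le (hSt.isHermitian.smul (.all _)) hS.isHermitian]
  intro v
  obtain rfl | hv := eq_or_ne v 0
  · simp
  have h := mul_variance_le_variance_of_tvDist_le (toNNReal_dotProduct_mulVec_ne_zero hS hv)
    (toNNReal_dotProduct_mulVec_ne_zero hSt hv) hγ
    ((tvDist_gaussianReal_dotProduct_le μ μt hS hSt v).trans htv)
  rwa [coe_toNNReal_dotProduct_mulVec hS.posSemidef, coe_toNNReal_dotProduct_mulVec hSt.posSemidef,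
    ← smul_eq_mul, ← dotProduct_smul, ← smul_mulVec] at h

lemma loewnerLE_vecMulVec_sub_of_tvDist_le (hS : S.PosDef) (hSt : St.PosDef) (hγ : γ < 1)
    (htv : tvDist (mvGaussian d μ S) (mvGaussian d μt St) ≤ γ) :
    loewnerLE (vecMulVec (μ - μt) (μ - μt)) ((4 * γ / (1 - γ)) • (S + St)) := by
  rw [loewnerLE_iff_dotProduct_mulVec_le (isHermitian_vecMulVec_self _)
    ((hS.add hSt).isHermitian.smul (.all _))]
  intro v
  obtain rfl | hv := eq_or_ne v 0
  · simp
  have h := sq_sub_le_mul_variance_add_of_tvDist_le (toNNReal_dotProduct_mulVec_ne_zero hS hv)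
    (toNNReal_dotProduct_mulVec_ne_zero hSt hv) hγ
    ((tvDist_gaussianReal_dotProduct_le μ μt hS hSt v).trans htv)
  rwa [coe_toNNReal_dotProduct_mulVec hS.posSemidef, coe_toNNReal_dotProduct_mulVec hSt.posSemidef,
    ← dotProduct_add, ← add_mulVec, ← smul_eq_mul, ← dotProduct_smul, ← smul_mulVec,
    ← dotProduct_sub, ← dotProduct_vecMulVec_self_mulVec] at h

end GaussianBounds

theorem gaussian_tv_loewner_bounds {d : ℕ} (μ μt : Fin d → ℝ)
    (S St : Matrix (Fin d) (Fin d) ℝ) (hS : S.PosDef) (hSt : St.PosDef) (γ : ℝ) (hγ : γ < 1)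
    (htv : tvDist (mvGaussian d μ S) (mvGaussian d μt St) ≤ γ) :
    loewnerLE (((1 - γ) ^ 4 / 4) • St) S ∧
    loewnerLE S ((4 / (1 - γ) ^ 4) • St) ∧
    loewnerLE (Matrix.vecMulVec (μ - μt) (μ - μt)) ((8 * γ / (1 - γ)) • (S + St)) := by
  have hγ₀ : 0 ≤ γ := (tvDist_nonneg _ _).trans htv
  have hγ₁ : 0 < 1 - γ := sub_pos.2 hγ
  refine ⟨loewnerLE_covariance_of_tvDist_le hS hSt hγ htv, ?_, ?_⟩
  · rw [tvDist_comm] at htv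
    have h := loewnerLE_inv_smul_of_smul_loewnerLE (by positivity)
      (loewnerLE_covariance_of_tvDist_le hSt hS hγ htv)
    rwa [inv_div] at h
  · have h_const : 4 * γ / (1 - γ) ≤ 8 * γ / (1 - γ) := by
      gcongr
      norm_num
    exact loewnerLE_smul_of_le h_const (hS.add hSt).posSemidef
      (loewnerLE_vecMulVec_sub_of_tvDist_le hS hSt hγ htv)
end

section
/- Let Z ∈ ℝ^{d×d} be a random matrix with i.i.d. N(0,1) entries. Then the smallest singular value σ_d(Z) satisfies P[σ_d(Z) ≤ β/√d] ≤ β, and the largest singular value σ_1(Z) satisfies P[σ_1(Z) ≥ 2√d + √(2·log(1/β))] ≤ β. -/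
open Real MeasureTheory Matrix ProbabilityTheory

/-- Smallest singular value of a square matrix: `inf` of `‖Zv‖` over unit vectors `v`. -/
noncomputable def smallestSingularValue {d : ℕ} (Z : Matrix (Fin d) (Fin d) ℝ) : ℝ :=
  sInf {t | ∃ v : Fin d → ℝ, ∑ i, v i ^ 2 = 1 ∧ t = Real.sqrt (∑ i, (Z *ᵥ v) i ^ 2)}

/-- Largest singular value of a square matrix: `sup` of `‖Zv‖` over unit vectors `v`. -/
noncomputable def largestSingularValue {d : ℕ} (Z : Matrix (Fin d) (Fin d) ℝ) : ℝ :=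
  sSup {t | ∃ v : Fin d → ℝ, ∑ i, v i ^ 2 = 1 ∧ t = Real.sqrt (∑ i, (Z *ᵥ v) i ^ 2)}

/-! Smallest singular value `σ_d`. Let `u` be a unit left singular vector for `σ_d`, and `r` an
independent Gaussian vector. Given `Z`, the overlap `|⟨u, r⟩|` has mean `√(2 / π)`, so it suffices
to bound the mean of the overlap on the event `σ_d ≤ s`; by rotation invariance `r` may be replaced
by `|r| e₁`, where `E |r| ≤ √d`. Condition on all rows but the first, and rotate so that their Gram
matrix becomes diagonal, with a null direction. The secular equation then determines the entry of
the first row along this direction, up to sign, as a function of `σ_d` and the other entries of the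
row. Change variables from that entry to `σ_d`: for each value of `σ_d`, the Jacobian times the
overlap `|⟨u, e₁⟩|` times the Gaussian density is dominated by an explicit Gaussian function of the
other entries, whose mean is `√(2 / π)`. Hence `P (σ_d ≤ s) ≤ s √d`.

Largest singular value `σ₁`. For unit vectors `p` and `q`, and Gaussian `x`, `g` and `h`, the fields
`⟨p, Z q⟩ + x` and `⟨p, g⟩ + ⟨q, h⟩` have equal variances, and their covariances differ by
`(1 - ⟨p, p'⟩) (1 - ⟨q, q'⟩) ≥ 0`. Slepian's inequality, proved by integrating by parts along a
rotation from one field to the other, compares their suprema `σ₁ + x` and `|g| + |h|`. Hence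
`E exp (l σ₁) * exp (l² / 2) ≤ (E exp (l |g|))² ≤ exp (2 l √d + l²)`, and Chernoff's bound at
`l = √(2 log (1 / β))` gives the tail. -/

section GaussianVectors

variable {ι κ : Type*} [Fintype ι] [Fintype κ]

/-- The standard Gaussian measure on `ι → ℝ`. Unlike Mathlib's `stdGaussian`, it lives on the
plain function space, on which the rows of a random matrix take their values. -/
noncomputable abbrev gaussianVector (ι : Type*) [Fintype ι] : Measure (ι → ℝ) :=
  Measure.pi fun _ => gaussianReal 0 1

/-- The law of a `ι × κ` matrix with independent standard Gaussian entries. -/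
noncomputable abbrev gaussianMatrix (ι κ : Type*) [Fintype ι] [Fintype κ] :
    Measure (ι → κ → ℝ) :=
  Measure.pi fun _ => gaussianVector κ

theorem measurePreserving_mulVec_gaussianVector [DecidableEq ι] {U : Matrix ι ι ℝ}
    (hU : U ∈ orthogonalGroup ι ℝ) :
    MeasurePreserving (U *ᵥ ·) (gaussianVector ι) (gaussianVector ι) := by
  let e := Unitary.linearIsometryEquiv
    ⟨toEuclideanCLM (n := ι) (𝕜 := ℝ) U, Unitary.map_mem toEuclideanCLM hU⟩
  have hmap := congrArg (Measure.map WithLp.ofLp) (stdGaussian_map e)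
  rw [← map_pi_eq_stdGaussian, Measure.map_map (by fun_prop) (by fun_prop),
    Measure.map_map (by fun_prop) (by fun_prop),
    Measure.map_map (by fun_prop) (by fun_prop)] at hmap
  exact ⟨by fun_prop, hmap.trans Measure.map_id⟩

theorem map_curry_gaussianVector :
    (gaussianVector (ι × κ)).map (MeasurableEquiv.curry ι κ ℝ) = gaussianMatrix ι κ := by
  simpa only [Measure.infinitePi_eq_pi] using
    Measure.infinitePi_map_curry fun (_ : ι) (_ : κ) => gaussianReal 0 1

theorem measurePreserving_swap_gaussianMatrix :
    MeasurePreserving (fun Z j i => Z i j) (gaussianMatrix ι κ) (gaussianMatrix κ ι) := by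
  have hswap : Measurable fun (Z : ι → κ → ℝ) j i => Z i j := by fun_prop
  have hcomm : (gaussianVector (ι × κ)).map
      (MeasurableEquiv.piCongrLeft (fun _ => ℝ) (Equiv.prodComm ι κ)) = gaussianVector (κ × ι) :=
    (measurePreserving_piCongrLeft (fun _ : κ × ι => gaussianReal 0 1) (Equiv.prodComm ι κ)).map_eq
  refine ⟨hswap, ?_⟩
  rw [← map_curry_gaussianVector, ← map_curry_gaussianVector, ← hcomm,
    Measure.map_map hswap (by fun_prop), Measure.map_map (by fun_prop) (by fun_prop)]
  rfl

theorem measurePreserving_mul_gaussianMatrix [DecidableEq ι] {U : Matrix ι ι ℝ}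
    (hU : U ∈ orthogonalGroup ι ℝ) :
    MeasurePreserving (fun (Z : ι → κ → ℝ) i j => (U * of Z) i j) (gaussianMatrix ι κ)
      (gaussianMatrix ι κ) :=
  measurePreserving_swap_gaussianMatrix.comp <|
    (measurePreserving_pi _ _ fun _ : κ => measurePreserving_mulVec_gaussianVector hU).comp
      measurePreserving_swap_gaussianMatrix

end GaussianVectors

section UnitSphere

variable {ι : Type*} [Fintype ι]

theorem real_dotProduct_self_nonneg (v : ι → ℝ) : 0 ≤ v ⬝ᵥ v := by
  simpa using dotProduct_star_self_nonneg v

theorem real_dotProduct_self_pos {v : ι → ℝ} (hv : v ≠ 0) : 0 < v ⬝ᵥ v := by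
  simpa using dotProduct_star_self_pos_iff.2 hv

theorem sum_sq_eq_dotProduct_self (v : ι → ℝ) : ∑ i, v i ^ 2 = v ⬝ᵥ v := by
  simp only [dotProduct, pow_two]

theorem isCompact_setOf_dotProduct_self_eq_one : IsCompact {v : ι → ℝ | v ⬝ᵥ v = 1} := by
  refine Metric.isCompact_of_isClosed_isBounded (isClosed_eq (by fun_prop) continuous_const) ?_
  refine (Metric.isBounded_iff_subset_closedBall 0).2 ⟨1, fun v hv => ?_⟩
  rw [mem_closedBall_zero_iff, pi_norm_le_iff_of_nonneg zero_le_one]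
  intro i
  rw [norm_eq_abs, ← sq_le_one_iff_abs_le_one, ← hv.out, ← sum_sq_eq_dotProduct_self]
  exact Finset.single_le_sum (f := fun i => v i ^ 2) (fun i _ => sq_nonneg _) (Finset.mem_univ i)

theorem exists_dotProduct_self_eq_one_and_smul_eq [Nonempty ι] (r : ι → ℝ) :
    ∃ v : ι → ℝ, v ⬝ᵥ v = 1 ∧ √(r ⬝ᵥ r) • v = r := by
  classical
  rcases eq_or_ne r 0 with rfl | hr
  · exact ⟨Pi.single (Classical.arbitrary ι) 1, by simp, by simp⟩
  · have hpos := real_dotProduct_self_pos hr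
    refine ⟨(√(r ⬝ᵥ r))⁻¹ • r, ?_, by rw [smul_inv_smul₀ (sqrt_ne_zero'.2 hpos)]⟩
    rw [smul_dotProduct, dotProduct_smul, smul_smul, ← mul_inv, mul_self_sqrt hpos.le,
      smul_eq_mul, inv_mul_cancel₀ hpos.ne']

section Orthogonal

variable [DecidableEq ι] {U : Matrix ι ι ℝ}

theorem mulVec_dotProduct_mulVec_of_mem_orthogonalGroup (hU : U ∈ orthogonalGroup ι ℝ)
    (x y : ι → ℝ) : (U *ᵥ x) ⬝ᵥ (U *ᵥ y) = x ⬝ᵥ y := by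
  rw [dotProduct_mulVec, ← mulVec_transpose, mulVec_mulVec, (mem_orthogonalGroup_iff' ι ℝ).1 hU,
    one_mulVec]

theorem mulVec_transpose_mulVec_of_mem_orthogonalGroup (hU : U ∈ orthogonalGroup ι ℝ)
    (x : ι → ℝ) : U *ᵥ (Uᵀ *ᵥ x) = x := by
  rw [mulVec_mulVec, (mem_orthogonalGroup_iff ι ℝ).1 hU, one_mulVec]

theorem image_mulVec_setOf_dotProduct_self_eq_one (hU : U ∈ orthogonalGroup ι ℝ) :
    (U *ᵥ ·) '' {v | v ⬝ᵥ v = 1} = {v | v ⬝ᵥ v = 1} := by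
  have hU' := transpose_mem_unitaryGroup_iff.2 hU
  ext v
  refine ⟨?_, fun hv => ⟨Uᵀ *ᵥ v, ?_, mulVec_transpose_mulVec_of_mem_orthogonalGroup hU v⟩⟩
  · rintro ⟨x, hx, rfl⟩
    exact (mulVec_dotProduct_mulVec_of_mem_orthogonalGroup hU x x).trans hx
  · exact (mulVec_dotProduct_mulVec_of_mem_orthogonalGroup hU' v v).trans hv

theorem exists_mem_orthogonalGroup_mulVec_eq {e v : ι → ℝ} (he : e ⬝ᵥ e = 1) (hv : v ⬝ᵥ v = 1) :
    ∃ U ∈ orthogonalGroup ι ℝ, U *ᵥ e = v := by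
  rcases eq_or_ne e v with rfl | hne
  · exact ⟨1, one_mem _, one_mulVec _⟩
  have hpos := real_dotProduct_self_pos (sub_ne_zero.2 hne)
  -- `1 - c • vecMulVec w w` is the reflection in the hyperplane orthogonal to `w`.
  set w := e - v with hw
  set c := 2 / (w ⬝ᵥ w)
  have hcw : c * (w ⬝ᵥ w) = 2 := div_mul_cancel₀ _ hpos.ne'
  have hwe : w ⬝ᵥ e = (w ⬝ᵥ w) / 2 := by
    simp only [hw, sub_dotProduct, dotProduct_sub, hv, he, dotProduct_comm e v]
    ring
  refine ⟨1 - c • vecMulVec w w, (mem_orthogonalGroup_iff ι ℝ).2 ?_, ?_⟩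
  · have hsq : vecMulVec w w * vecMulVec w w = (w ⬝ᵥ w) • vecMulVec w w := by
      rw [vecMulVec_mul_vecMulVec, vecMulVec_smul]
    rw [transpose_sub, transpose_one, transpose_smul, transpose_vecMulVec, sub_mul, mul_sub,
      mul_sub, one_mul, mul_one, one_mul, smul_mul_smul_comm, hsq, smul_smul, mul_assoc, hcw]
    module
  · ext i
    have hwi : w i = e i - v i := rfl
    simp only [sub_mulVec, one_mulVec, smul_mulVec, vecMulVec_mulVec, hwe, Pi.sub_apply,
      Pi.smul_apply, MulOpposite.smul_eq_mul_unop, MulOpposite.unop_op, smul_eq_mul]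
    linear_combination (-w i / 2) * hcw - hwi

end Orthogonal

end UnitSphere

section SingularValues

variable {d : ℕ} (Z : Matrix (Fin d) (Fin d) ℝ)

theorem smallestSingularValue_eq_sInf_image :
    smallestSingularValue Z =
      sInf ((fun v => √((Z *ᵥ v) ⬝ᵥ (Z *ᵥ v))) '' {v | v ⬝ᵥ v = 1}) := by
  simp only [smallestSingularValue, sum_sq_eq_dotProduct_self, Set.image, Set.mem_ofPred_eq,
    eq_comm]

theorem largestSingularValue_eq_sSup_image :
    largestSingularValue Z =
      sSup ((fun v => √((Z *ᵥ v) ⬝ᵥ (Z *ᵥ v))) '' {v | v ⬝ᵥ v = 1}) := by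
  simp only [largestSingularValue, sum_sq_eq_dotProduct_self, Set.image, Set.mem_ofPred_eq, eq_comm]

theorem continuous_smallestSingularValue :
    Continuous fun Z : Fin d → Fin d → ℝ => smallestSingularValue (of Z) := by
  simp only [smallestSingularValue_eq_sInf_image]
  refine isCompact_setOf_dotProduct_self_eq_one.continuous_sInf ?_
  have hmul : Continuous fun p : (Fin d → Fin d → ℝ) × (Fin d → ℝ) => of p.1 *ᵥ p.2 :=
    Continuous.matrix_mulVec continuous_fst continuous_snd
  exact (hmul.dotProduct hmul).sqrt

theorem continuous_largestSingularValue :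
    Continuous fun Z : Fin d → Fin d → ℝ => largestSingularValue (of Z) := by
  simp only [largestSingularValue_eq_sSup_image]
  refine isCompact_setOf_dotProduct_self_eq_one.continuous_sSup ?_
  have hmul : Continuous fun p : (Fin d → Fin d → ℝ) × (Fin d → ℝ) => of p.1 *ᵥ p.2 :=
    Continuous.matrix_mulVec continuous_fst continuous_snd
  exact (hmul.dotProduct hmul).sqrt

theorem smallestSingularValue_nonneg : 0 ≤ smallestSingularValue Z :=
  Real.sInf_nonneg <| by
    rintro _ ⟨v, -, rfl⟩
    exact sqrt_nonneg _

theorem sq_smallestSingularValue_mul_dotProduct_self_le (x : Fin d → ℝ) :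
    smallestSingularValue Z ^ 2 * (x ⬝ᵥ x) ≤ (Z *ᵥ x) ⬝ᵥ (Z *ᵥ x) := by
  rcases eq_or_ne x 0 with rfl | hx
  · simp
  obtain ⟨i, -⟩ := Function.ne_iff.1 hx
  have : Nonempty (Fin d) := ⟨i⟩
  obtain ⟨v, hv, hvx⟩ := exists_dotProduct_self_eq_one_and_smul_eq x
  have hle : smallestSingularValue Z ≤ √((Z *ᵥ v) ⬝ᵥ (Z *ᵥ v)) := by
    rw [smallestSingularValue_eq_sInf_image]
    refine csInf_le ⟨0, ?_⟩ ⟨v, hv, rfl⟩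
    rintro _ ⟨w, -, rfl⟩
    exact sqrt_nonneg _
  have hsq := (le_sqrt (smallestSingularValue_nonneg Z) (real_dotProduct_self_nonneg _)).1 hle
  have hscale : (Z *ᵥ x) ⬝ᵥ (Z *ᵥ x) = (x ⬝ᵥ x) * ((Z *ᵥ v) ⬝ᵥ (Z *ᵥ v)) := by
    conv_lhs => rw [← hvx, mulVec_smul, smul_dotProduct, dotProduct_smul, smul_smul,
      mul_self_sqrt (real_dotProduct_self_nonneg x), smul_eq_mul]
  rw [hscale, mul_comm]
  exact mul_le_mul_of_nonneg_left hsq (real_dotProduct_self_nonneg x)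

theorem exists_mulVec_dotProduct_self_eq_sq_smallestSingularValue [NeZero d] :
    ∃ v : Fin d → ℝ, v ⬝ᵥ v = 1 ∧ (Z *ᵥ v) ⬝ᵥ (Z *ᵥ v) = smallestSingularValue Z ^ 2 := by
  obtain ⟨v, hv, hmin, -⟩ :=
    isCompact_setOf_dotProduct_self_eq_one.exists_sInf_image_eq_and_le
      ⟨Pi.single 0 1, by simp⟩ (f := fun v : Fin d → ℝ => √((Z *ᵥ v) ⬝ᵥ (Z *ᵥ v))) (by fun_prop)
  exact ⟨v, hv, by
    rw [smallestSingularValue_eq_sInf_image, hmin, sq_sqrt (real_dotProduct_self_nonneg _)]⟩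

theorem exists_dotProduct_mulVec_eq_largestSingularValue [NeZero d] :
    ∃ u v : Fin d → ℝ, u ⬝ᵥ u = 1 ∧ v ⬝ᵥ v = 1 ∧ u ⬝ᵥ (Z *ᵥ v) = largestSingularValue Z := by
  obtain ⟨v, hv, hmax, -⟩ :=
    isCompact_setOf_dotProduct_self_eq_one.exists_sSup_image_eq_and_ge
      ⟨Pi.single 0 1, by simp⟩ (f := fun v : Fin d → ℝ => √((Z *ᵥ v) ⬝ᵥ (Z *ᵥ v))) (by fun_prop)
  obtain ⟨u, hu, huv⟩ := exists_dotProduct_self_eq_one_and_smul_eq (Z *ᵥ v)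
  refine ⟨u, v, hu, hv, ?_⟩
  rw [largestSingularValue_eq_sSup_image, hmax]
  nth_rw 1 [← huv]
  rw [dotProduct_smul, hu, smul_eq_mul, mul_one]

theorem det_transpose_mul_self_sub_sq_smallestSingularValue [NeZero d] :
    (Zᵀ * Z - scalar (Fin d) (smallestSingularValue Z ^ 2)).det = 0 := by
  obtain ⟨v, hv, hZv⟩ := exists_mulVec_dotProduct_self_eq_sq_smallestSingularValue Z
  have hmul (x : Fin d → ℝ) :
      x ⬝ᵥ ((Zᵀ * Z - scalar (Fin d) (smallestSingularValue Z ^ 2)) *ᵥ x) =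
        (Z *ᵥ x) ⬝ᵥ (Z *ᵥ x) - smallestSingularValue Z ^ 2 * (x ⬝ᵥ x) := by
    rw [sub_mulVec, dotProduct_sub, ← mulVec_mulVec, dotProduct_mulVec x, vecMul_transpose,
      scalar_apply, ← smul_one_eq_diagonal, smul_mulVec, one_mulVec, dotProduct_smul, smul_eq_mul]
  have hpsd : (Zᵀ * Z - scalar (Fin d) (smallestSingularValue Z ^ 2)).PosSemidef := by
    refine .of_dotProduct_mulVec_nonneg ?_ fun x => ?_
    · simp [IsHermitian, conjTranspose_eq_transpose_of_trivial]
    · rw [star_trivial, hmul, sub_nonneg]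
      exact sq_smallestSingularValue_mul_dotProduct_self_le Z x
  refine exists_mulVec_eq_zero_iff.1 ⟨v, ?_, (hpsd.dotProduct_mulVec_zero_iff v).1 ?_⟩
  · rintro rfl
    simp at hv
  · rw [star_trivial, hmul, hv, hZv, mul_one, sub_self]

/-- The unit left singular vectors of `Z` for its smallest singular value. -/
def leastLeftSingularVectors : Set (Fin d → ℝ) :=
  {u | u ⬝ᵥ u = 1 ∧ Z *ᵥ (Zᵀ *ᵥ u) = smallestSingularValue Z ^ 2 • u}

theorem leastLeftSingularVectors_nonempty [NeZero d] : (leastLeftSingularVectors Z).Nonempty := by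
  have hdet : (Z * Zᵀ - scalar (Fin d) (smallestSingularValue Z ^ 2)).det = 0 := by
    have h := det_transpose_mul_self_sub_sq_smallestSingularValue Z
    rw [← neg_sub, det_neg, ← eval_charpoly] at h ⊢
    rwa [charpoly_mul_comm]
  obtain ⟨x, hx, hZx⟩ := exists_mulVec_eq_zero_iff.2 hdet
  obtain ⟨u, hu, hux⟩ := exists_dotProduct_self_eq_one_and_smul_eq x
  refine ⟨u, hu, ?_⟩
  rw [← hux, mulVec_smul, smul_eq_zero] at hZx
  have := hZx.resolve_left (sqrt_ne_zero'.2 (real_dotProduct_self_pos hx))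
  rwa [sub_mulVec, sub_eq_zero, ← mulVec_mulVec, scalar_apply, ← smul_one_eq_diagonal, smul_mulVec,
    one_mulVec] at this

theorem isClosed_setOf_mem_leastLeftSingularVectors :
    IsClosed {q : (Fin d → Fin d → ℝ) × (Fin d → ℝ) | q.2 ∈ leastLeftSingularVectors (of q.1)} := by
  have htrans : Continuous fun q : (Fin d → Fin d → ℝ) × (Fin d → ℝ) => (of q.1)ᵀ *ᵥ q.2 :=
    Continuous.matrix_mulVec continuous_fst.matrix_transpose continuous_snd
  refine (isClosed_eq (by fun_prop) continuous_const).and (isClosed_eq ?_ ?_)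
  · exact Continuous.matrix_mulVec continuous_fst htrans
  · exact ((continuous_smallestSingularValue.comp continuous_fst).pow 2).smul continuous_snd

section Orthogonal

variable {U : Matrix (Fin d) (Fin d) ℝ}

theorem smallestSingularValue_orthogonal_mul (hU : U ∈ orthogonalGroup (Fin d) ℝ) :
    smallestSingularValue (U * Z) = smallestSingularValue Z := by
  simp only [smallestSingularValue_eq_sInf_image, ← mulVec_mulVec,
    mulVec_dotProduct_mulVec_of_mem_orthogonalGroup hU]

theorem smallestSingularValue_mul_orthogonal (hU : U ∈ orthogonalGroup (Fin d) ℝ) :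
    smallestSingularValue (Z * U) = smallestSingularValue Z := by
  rw [smallestSingularValue_eq_sInf_image, smallestSingularValue_eq_sInf_image Z]
  conv_rhs => rw [← image_mulVec_setOf_dotProduct_self_eq_one hU, Set.image_image]
  simp only [mulVec_mulVec]

variable {Z} in
theorem mulVec_mem_leastLeftSingularVectors (hU : U ∈ orthogonalGroup (Fin d) ℝ) {u : Fin d → ℝ}
    (hu : u ∈ leastLeftSingularVectors Z) : U *ᵥ u ∈ leastLeftSingularVectors (U * Z) := by
  refine ⟨(mulVec_dotProduct_mulVec_of_mem_orthogonalGroup hU u u).trans hu.1, ?_⟩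
  rw [transpose_mul, ← mulVec_mulVec, ← mulVec_mulVec, mulVec_mulVec u,
    (mem_orthogonalGroup_iff' _ ℝ).1 hU, one_mulVec, hu.2, mulVec_smul,
    smallestSingularValue_orthogonal_mul Z hU]

theorem leastLeftSingularVectors_orthogonal_mul (hU : U ∈ orthogonalGroup (Fin d) ℝ) :
    leastLeftSingularVectors (U * Z) = (U *ᵥ ·) '' leastLeftSingularVectors Z := by
  refine Set.Subset.antisymm (fun u hu => ⟨Uᵀ *ᵥ u, ?_, ?_⟩) ?_
  · have := mulVec_mem_leastLeftSingularVectors (transpose_mem_unitaryGroup_iff.2 hU) hu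
    rwa [← Matrix.mul_assoc, (mem_orthogonalGroup_iff' _ ℝ).1 hU, Matrix.one_mul] at this
  · exact mulVec_transpose_mulVec_of_mem_orthogonalGroup hU u
  · exact Set.image_subset_iff.2 fun u hu => mulVec_mem_leastLeftSingularVectors hU hu

theorem leastLeftSingularVectors_mul_orthogonal (hU : U ∈ orthogonalGroup (Fin d) ℝ) :
    leastLeftSingularVectors (Z * U) = leastLeftSingularVectors Z := by
  simp only [leastLeftSingularVectors, smallestSingularValue_mul_orthogonal Z hU, transpose_mul,
    ← mulVec_mulVec, mulVec_transpose_mulVec_of_mem_orthogonalGroup hU]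

end Orthogonal

/-- The largest overlap of `r` with a least left singular vector of `Z`. Taking the supremum
avoids selecting one of these vectors, and keeps the overlap measurable in `(Z, r)`. -/
noncomputable def leastLeftOverlap (r : Fin d → ℝ) : ENNReal :=
  ⨆ u ∈ leastLeftSingularVectors Z, ENNReal.ofReal |u ⬝ᵥ r|

theorem exists_leastLeftOverlap_eq [NeZero d] (r : Fin d → ℝ) :
    ∃ u ∈ leastLeftSingularVectors Z, leastLeftOverlap Z r = ENNReal.ofReal |u ⬝ᵥ r| := by
  have hcompact : IsCompact (leastLeftSingularVectors Z) :=
    isCompact_setOf_dotProduct_self_eq_one.of_isClosed_subset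
      (isClosed_setOf_mem_leastLeftSingularVectors.preimage (f := fun u => (Z, u)) (by fun_prop))
      fun _ hu => hu.1
  have hcont : Continuous fun u => ENNReal.ofReal |u ⬝ᵥ r| :=
    ENNReal.continuous_ofReal.comp (by fun_prop)
  obtain ⟨u, hu, hmax⟩ :=
    hcompact.exists_isMaxOn (leastLeftSingularVectors_nonempty Z) hcont.continuousOn
  exact ⟨u, hu, le_antisymm (iSup₂_le fun v hv => hmax hv) (le_iSup₂_of_le u hu le_rfl)⟩

theorem measurable_leastLeftOverlap [NeZero d] :
    Measurable fun p : (Fin d → Fin d → ℝ) × (Fin d → ℝ) => leastLeftOverlap (of p.1) p.2 := by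
  let S := {u : Fin d → ℝ | u ⬝ᵥ u = 1}
  have : CompactSpace S :=
    isCompact_iff_compactSpace.1 isCompact_setOf_dotProduct_self_eq_one
  refine measurable_of_Ici fun c => IsClosed.measurableSet ?_
  let T : Set (((Fin d → Fin d → ℝ) × (Fin d → ℝ)) × S) :=
    {q | q.2.1 ∈ leastLeftSingularVectors (of q.1.1) ∧ c ≤ ENNReal.ofReal |q.2.1 ⬝ᵥ q.1.2|}
  have hT : IsClosed T := by
    refine .and ?_ (isClosed_le continuous_const (ENNReal.continuous_ofReal.comp ?_))
    · exact isClosed_setOf_mem_leastLeftSingularVectors.preimage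
        (f := fun q : ((Fin d → Fin d → ℝ) × (Fin d → ℝ)) × S => (q.1.1, q.2.1)) (by fun_prop)
    · exact (Continuous.dotProduct (by fun_prop) (by fun_prop)).abs
  convert isClosedMap_fst_of_compactSpace T hT using 1
  ext ⟨Z, r⟩
  refine ⟨fun hc => ?_, ?_⟩
  · obtain ⟨u, hu, hur⟩ := exists_leastLeftOverlap_eq (of Z) r
    exact ⟨((Z, r), ⟨u, hu.1⟩), ⟨hu, hur ▸ hc⟩, rfl⟩
  · rintro ⟨⟨_, u⟩, ⟨hu, hc⟩, rfl⟩
    exact hc.trans (le_iSup₂_of_le u.1 hu le_rfl)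

theorem leastLeftOverlap_smul {c : ℝ} (hc : 0 ≤ c) (r : Fin d → ℝ) :
    leastLeftOverlap Z (c • r) = ENNReal.ofReal c * leastLeftOverlap Z r := by
  simp only [leastLeftOverlap, ENNReal.mul_iSup, dotProduct_smul, smul_eq_mul, abs_mul,
    abs_of_nonneg hc, ENNReal.ofReal_mul hc]

theorem leastLeftOverlap_orthogonal_mul {U : Matrix (Fin d) (Fin d) ℝ}
    (hU : U ∈ orthogonalGroup (Fin d) ℝ) (r : Fin d → ℝ) :
    leastLeftOverlap (U * Z) (U *ᵥ r) = leastLeftOverlap Z r := by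
  simp only [leastLeftOverlap, leastLeftSingularVectors_orthogonal_mul Z hU, iSup_image,
    mulVec_dotProduct_mulVec_of_mem_orthogonalGroup hU]

end SingularValues

section RankOnePerturbation

variable {ι : Type*} [Fintype ι] [DecidableEq ι] {a μ y : ι → ℝ} {t : ℝ}

theorem apply_eq_of_vecMulVec_add_diagonal_mulVec_eq
    (h : (vecMulVec a a + diagonal μ) *ᵥ y = t • y) (hμ : ∀ i, μ i ≠ t) (i : ι) :
    y i = -(a ⬝ᵥ y) * (a i / (μ i - t)) := by
  have hi := congrFun h i
  rw [add_mulVec, Pi.add_apply, mulVec_diagonal, vecMulVec_mulVec] at hi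
  simp only [Pi.smul_apply, smul_eq_mul, MulOpposite.smul_eq_mul_unop, MulOpposite.unop_op] at hi
  rw [mul_div_assoc', eq_div_iff (sub_ne_zero.2 (hμ i))]
  linear_combination hi

theorem sum_sq_div_sub_eq_neg_one (h : (vecMulVec a a + diagonal μ) *ᵥ y = t • y)
    (hμ : ∀ i, μ i ≠ t) (hy : y ≠ 0) : ∑ i, a i ^ 2 / (μ i - t) = -1 := by
  have hya := apply_eq_of_vecMulVec_add_diagonal_mulVec_eq h hμ
  have hne : a ⬝ᵥ y ≠ 0 := fun h0 => hy (funext fun i => by rw [hya i, h0]; simp)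
  have hsum : a ⬝ᵥ y = -(a ⬝ᵥ y) * ∑ i, a i ^ 2 / (μ i - t) := by
    conv_lhs => rw [dotProduct]
    rw [Finset.mul_sum]
    refine Finset.sum_congr rfl fun i _ => ?_
    rw [hya i]
    ring
  refine mul_left_cancel₀ hne ?_
  linear_combination hsum

theorem dotProduct_self_eq_mul_sum_sq_div_sq (h : (vecMulVec a a + diagonal μ) *ᵥ y = t • y)
    (hμ : ∀ i, μ i ≠ t) : y ⬝ᵥ y = (a ⬝ᵥ y) ^ 2 * ∑ i, a i ^ 2 / (μ i - t) ^ 2 := by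
  rw [← sum_sq_eq_dotProduct_self, Finset.mul_sum]
  refine Finset.sum_congr rfl fun i _ => ?_
  rw [apply_eq_of_vecMulVec_add_diagonal_mulVec_eq h hμ i, mul_pow, neg_sq, div_pow]

end RankOnePerturbation

section FirstRow

/-- The matrix with first row `a` and remaining rows those of `B`. -/
abbrev consRow {m : ℕ} {κ : Type*} (a : κ → ℝ) (B : Matrix (Fin m) κ ℝ) :
    Matrix (Fin (m + 1)) κ ℝ :=
  of (Fin.cons a B)

variable {m : ℕ}

theorem transpose_consRow_mul_consRow {κ : Type*} (a : κ → ℝ) (B : Matrix (Fin m) κ ℝ) :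
    (consRow a B)ᵀ * consRow a B = vecMulVec a a + Bᵀ * B := by
  ext i j
  rw [Matrix.mul_apply, Fin.sum_univ_succ]
  rfl

theorem consRow_mul {κ l : Type*} [Fintype κ] (a : κ → ℝ) (B : Matrix (Fin m) κ ℝ)
    (U : Matrix κ l ℝ) : consRow a B * U = consRow (a ᵥ* U) (B * U) := by
  ext i j
  refine Fin.cases ?_ (fun _ => ?_) i <;> rfl

theorem exists_mem_orthogonalGroup_transpose_mul_self_eq_diagonal {ι κ : Type*} [Fintype ι]
    [Fintype κ] [DecidableEq κ] (B : Matrix ι κ ℝ) (hcard : Fintype.card ι < Fintype.card κ) :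
    ∃ U ∈ orthogonalGroup κ ℝ, ∃ (μ : κ → ℝ) (i₀ : κ),
      (B * U)ᵀ * (B * U) = diagonal μ ∧ μ i₀ = 0 := by
  have hB : (Bᵀ * B).IsHermitian := by
    simpa using isHermitian_conjTranspose_mul_self B
  have hdet : (Bᵀ * B).det = 0 := by
    by_contra h
    have hrank := rank_of_isUnit (Bᵀ * B) ((isUnit_iff_isUnit_det _).2 (isUnit_iff_ne_zero.2 h))
    exact hcard.not_ge (hrank ▸ (rank_mul_le_left Bᵀ B).trans (rank_le_card_width _))
  obtain ⟨i₀, -, hi₀⟩ := Finset.prod_eq_zero_iff.1 (hB.det_eq_prod_eigenvalues.symm.trans hdet)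
  refine ⟨hB.eigenvectorUnitary, hB.eigenvectorUnitary.2, hB.eigenvalues, i₀, ?_, hi₀⟩
  have hdiag := hB.conjStarAlgAut_star_eigenvectorUnitary
  simpa [Unitary.conjStarAlgAut_apply, Matrix.mul_assoc, star_eq_conjTranspose] using hdiag

variable {a μ u : Fin (m + 1) → ℝ} {B : Matrix (Fin m) (Fin (m + 1)) ℝ} {i₀ : Fin (m + 1)}

theorem transpose_consRow_mulVec_apply (hB : (Bᵀ * B) i₀ i₀ = 0) :
    ((consRow a B)ᵀ *ᵥ u) i₀ = a i₀ * u 0 := by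
  have hcol : B.col i₀ = 0 := dotProduct_self_eq_zero.1 hB
  have hsum : ((consRow a B)ᵀ *ᵥ u) i₀ = a i₀ * u 0 + B.col i₀ ⬝ᵥ Fin.tail u := Fin.sum_univ_succ _
  rw [hsum, hcol, zero_dotProduct, add_zero]

theorem transpose_mulVec_dotProduct_self_of_mem_leastLeftSingularVectors {d : ℕ}
    {Z : Matrix (Fin d) (Fin d) ℝ} {u : Fin d → ℝ} (hu : u ∈ leastLeftSingularVectors Z) :
    (Zᵀ *ᵥ u) ⬝ᵥ (Zᵀ *ᵥ u) = smallestSingularValue Z ^ 2 := by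
  rw [dotProduct_mulVec, vecMul_transpose, hu.2, smul_dotProduct, hu.1, smul_eq_mul, mul_one]

theorem smallestSingularValue_consRow_pos (hB : (Bᵀ * B) i₀ i₀ = 0) (ha : a i₀ ≠ 0)
    (hu : u ∈ leastLeftSingularVectors (consRow a B)) (hu0 : u 0 ≠ 0) :
    0 < smallestSingularValue (consRow a B) := by
  refine (smallestSingularValue_nonneg _).lt_of_ne' fun h => ?_
  have h0 := transpose_mulVec_dotProduct_self_of_mem_leastLeftSingularVectors hu
  rw [h, zero_pow two_ne_zero, dotProduct_self_eq_zero] at h0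
  exact mul_ne_zero ha hu0 ((transpose_consRow_mulVec_apply hB).symm.trans (congrFun h0 i₀))

theorem sq_smallestSingularValue_consRow_lt (hB : Bᵀ * B = diagonal μ) (hμ : μ i₀ = 0)
    (hpos : 0 < smallestSingularValue (consRow a B)) {i : Fin (m + 1)} (hi : i ≠ i₀)
    (ha : a i ≠ 0) : smallestSingularValue (consRow a B) ^ 2 < μ i := by
  set Z := consRow a B
  let x : Fin (m + 1) → ℝ := Pi.single i₀ (a i) - Pi.single i (a i₀)
  have hx : x ⬝ᵥ x = a i ^ 2 + a i₀ ^ 2 := by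
    simp [x, hi, hi.symm]
    ring
  have hZx : (Z *ᵥ x) ⬝ᵥ (Z *ᵥ x) = μ i * a i₀ ^ 2 := by
    rw [dotProduct_mulVec, ← vecMul_transpose, vecMul_vecMul, ← dotProduct_mulVec,
      transpose_consRow_mul_consRow, hB]
    simp [x, hi, hi.symm, vecMulVec_apply, mulVec_sub, hμ]
    ring
  have hle := sq_smallestSingularValue_mul_dotProduct_self_le Z x
  rw [hx, hZx] at hle
  have := mul_pos (pow_pos hpos 2) (sq_pos_of_ne_zero ha)
  nlinarith [sq_nonneg (a i₀)]

theorem vecMulVec_add_diagonal_mulVec_of_mem_leastLeftSingularVectors (hB : Bᵀ * B = diagonal μ)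
    (hu : u ∈ leastLeftSingularVectors (consRow a B)) :
    (vecMulVec a a + diagonal μ) *ᵥ ((consRow a B)ᵀ *ᵥ u) =
      smallestSingularValue (consRow a B) ^ 2 • ((consRow a B)ᵀ *ᵥ u) := by
  rw [← hB, ← transpose_consRow_mul_consRow, ← mulVec_mulVec, hu.2, mulVec_smul]

theorem dotProduct_transpose_consRow_mulVec
    (hu : u ∈ leastLeftSingularVectors (consRow a B)) :
    a ⬝ᵥ ((consRow a B)ᵀ *ᵥ u) = smallestSingularValue (consRow a B) ^ 2 * u 0 :=
  congrFun hu.2 0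

end FirstRow

section SecularEquation

section Definitions

variable {ι : Type*} [Fintype ι] (ν w : ι → ℝ) (σ : ℝ)

/-- The secular function `1 + ∑ w² / (ν - σ²)` of a rank-one perturbation `w wᵀ` of the diagonal
matrix with entries `ν`; its zeros `σ²` are the perturbed eigenvalues. -/
noncomputable def secularSum : ℝ := 1 + ∑ j, w j ^ 2 / (ν j - σ ^ 2)

/-- The modulus of the first-row entry along the null direction of the remaining rows for which
`σ` is the smallest singular value. -/
noncomputable def secularRadius : ℝ := σ * √(secularSum ν w σ)

/-- The inverse square of the first entry of the singular vector belonging to `σ`; it is also the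
derivative of `σ² * secularSum ν w σ` with respect to `σ²`. -/
noncomputable def secularWeight : ℝ := 1 + ∑ j, w j ^ 2 * ν j / (ν j - σ ^ 2) ^ 2

/-- The values below every positive singular value `√(ν j)` of the remaining rows. -/
def secularDomain {ι : Type*} (ν : ι → ℝ) : Set ℝ := {σ | 0 < σ ∧ ∀ j, σ ^ 2 < ν j}

end Definitions

variable {m : ℕ} {B : Matrix (Fin m) (Fin (m + 1)) ℝ} {i₀ : Fin (m + 1)} {ν w : Fin m → ℝ} {x : ℝ}
  {σ : ℝ} {u : Fin (m + 1) → ℝ}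

theorem smallestSingularValue_consRow_mem_secularDomain
    (hB : Bᵀ * B = diagonal (i₀.insertNth 0 ν)) (hx : x ≠ 0) (hw : ∀ j, w j ≠ 0)
    (hu : u ∈ leastLeftSingularVectors (consRow (i₀.insertNth x w) B)) (hu0 : u 0 ≠ 0) :
    smallestSingularValue (consRow (i₀.insertNth x w) B) ∈ secularDomain ν := by
  have hpos := smallestSingularValue_consRow_pos (i₀ := i₀) (by simp [hB]) (by simpa) hu hu0
  refine ⟨hpos, fun j => ?_⟩
  simpa using sq_smallestSingularValue_consRow_lt hB (by simp) hpos (i₀.succAbove_ne j)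
    (by simpa using hw j)

theorem one_le_secularSum (hσ : σ ∈ secularDomain ν) : 1 ≤ secularSum ν w σ :=
  le_add_of_nonneg_right <|
    Finset.sum_nonneg fun j _ => div_nonneg (sq_nonneg _) (sub_nonneg.2 (hσ.2 j).le)

theorem sq_secularRadius (hσ : σ ∈ secularDomain ν) :
    secularRadius ν w σ ^ 2 = σ ^ 2 * secularSum ν w σ := by
  rw [secularRadius, mul_pow, sq_sqrt (zero_le_one.trans (one_le_secularSum hσ))]

theorem secularWeight_eq (hσ : σ ∈ secularDomain ν) :
    secularWeight ν w σ = secularSum ν w σ + σ ^ 2 * ∑ j, w j ^ 2 / (ν j - σ ^ 2) ^ 2 := by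
  rw [secularWeight, secularSum, add_assoc, Finset.mul_sum, ← Finset.sum_add_distrib]
  congr 1
  refine Finset.sum_congr rfl fun j _ => ?_
  have := sub_ne_zero.2 (hσ.2 j).ne'
  field_simp
  ring

theorem insertNth_ne_sq_of_mem_secularDomain (hσ : σ ∈ secularDomain ν) (i : Fin (m + 1)) :
    i₀.insertNth (α := fun _ => ℝ) 0 ν i ≠ σ ^ 2 := by
  refine i₀.succAboveCases ?_ (fun j => ?_) i
  · simpa using (pow_pos hσ.1 2).ne
  · simpa using (hσ.2 j).ne'

theorem abs_eq_secularRadius (hB : Bᵀ * B = diagonal (i₀.insertNth 0 ν)) (hx : x ≠ 0)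
    (hw : ∀ j, w j ≠ 0) (hu : u ∈ leastLeftSingularVectors (consRow (i₀.insertNth x w) B))
    (hu0 : u 0 ≠ 0) :
    |x| = secularRadius ν w (smallestSingularValue (consRow (i₀.insertNth x w) B)) := by
  have hσ := smallestSingularValue_consRow_mem_secularDomain hB hx hw hu hu0
  have hy : (consRow (i₀.insertNth x w) B)ᵀ *ᵥ u ≠ 0 := fun h =>
    (pow_pos hσ.1 2).ne' <| by
      rw [← transpose_mulVec_dotProduct_self_of_mem_leastLeftSingularVectors hu, h, dotProduct_zero]
  have hsum := sum_sq_div_sub_eq_neg_one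
    (vecMulVec_add_diagonal_mulVec_of_mem_leastLeftSingularVectors hB hu)
    (insertNth_ne_sq_of_mem_secularDomain hσ) hy
  set σ := smallestSingularValue (consRow (i₀.insertNth x w) B)
  simp only [Fin.sum_univ_succAbove _ i₀, Fin.insertNth_apply_same, zero_sub,
    Fin.insertNth_apply_succAbove] at hsum
  have hsq : x ^ 2 = σ ^ 2 * secularSum ν w σ := by
    have := hσ.1.ne'
    rw [secularSum]
    field_simp at hsum
    linear_combination -hsum
  rw [secularRadius, ← sqrt_sq_eq_abs, hsq, sqrt_mul (sq_nonneg σ), sqrt_sq hσ.1.le]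

theorem abs_apply_zero_eq_inv_sqrt_secularWeight (hB : Bᵀ * B = diagonal (i₀.insertNth 0 ν))
    (hx : x ≠ 0) (hw : ∀ j, w j ≠ 0)
    (hu : u ∈ leastLeftSingularVectors (consRow (i₀.insertNth x w) B)) (hu0 : u 0 ≠ 0) :
    |u 0| = (√(secularWeight ν w (smallestSingularValue (consRow (i₀.insertNth x w) B))))⁻¹ := by
  have hσ := smallestSingularValue_consRow_mem_secularDomain hB hx hw hu hu0
  have hradius := sq_abs x ▸ congrArg (· ^ 2) (abs_eq_secularRadius hB hx hw hu hu0)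
  have hsum := dotProduct_self_eq_mul_sum_sq_div_sq
    (vecMulVec_add_diagonal_mulVec_of_mem_leastLeftSingularVectors hB hu)
    (insertNth_ne_sq_of_mem_secularDomain hσ)
  rw [transpose_mulVec_dotProduct_self_of_mem_leastLeftSingularVectors hu,
    dotProduct_transpose_consRow_mulVec hu] at hsum
  set σ := smallestSingularValue (consRow (i₀.insertNth x w) B)
  simp only [Fin.sum_univ_succAbove _ i₀, Fin.insertNth_apply_same, zero_sub,
    Fin.insertNth_apply_succAbove] at hsum
  have hone : u 0 ^ 2 * secularWeight ν w σ = 1 := by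
    have hne := hσ.1.ne'
    rw [hradius, sq_secularRadius hσ] at hsum
    rw [secularWeight_eq hσ]
    field_simp at hsum
    linear_combination -hsum
  rw [← sqrt_sq_eq_abs, eq_inv_of_mul_eq_one_left hone, sqrt_inv]

end SecularEquation

section GaussianIntegrals

theorem gaussianPDFReal_zero_one (x : ℝ) :
    gaussianPDFReal 0 1 x = (√(2 * π))⁻¹ * rexp (-(1 / 2) * x ^ 2) := by
  rw [gaussianPDFReal_def]
  simp only [NNReal.coe_one, mul_one, sub_zero]
  ring_nf

theorem lintegral_gaussianReal (f : ℝ → ENNReal) :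
    ∫⁻ x, f x ∂(gaussianReal 0 1) = ∫⁻ x, gaussianPDF 0 1 x * f x := by
  rw [gaussianReal_of_var_ne_zero _ one_ne_zero,
    lintegral_withDensity_eq_lintegral_mul_non_measurable _ (measurable_gaussianPDF _ _)
      (.of_forall fun _ => gaussianPDF_lt_top)]
  rfl

theorem lintegral_gaussianReal_comp_abs (f : ℝ → ENNReal) :
    ∫⁻ x, f |x| ∂(gaussianReal 0 1) = 2 * ∫⁻ x in Set.Ioi 0, gaussianPDF 0 1 x * f x := by
  rw [lintegral_gaussianReal, ← lintegral_add_compl _ measurableSet_Ioi (A := Set.Ioi 0), two_mul,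
    Set.compl_Ioi, setLIntegral_congr Iio_ae_eq_Iic.symm,
    show Set.Iio (0 : ℝ) = -Set.Ioi 0 by simp]
  congr 1
  · exact setLIntegral_congr_fun measurableSet_Ioi fun x hx => by rw [abs_of_pos hx]
  · rw [← (Measure.measurePreserving_neg (volume : Measure ℝ)).setLIntegral_comp_preimage_emb
      (MeasurableEquiv.neg ℝ).measurableEmbedding _ (-Set.Ioi 0), Set.neg_preimage, neg_neg]
    refine setLIntegral_congr_fun measurableSet_Ioi fun x hx => ?_
    rw [abs_neg, abs_of_pos hx, gaussianPDF, gaussianPDF, gaussianPDFReal_zero_one,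
      gaussianPDFReal_zero_one, neg_sq]

theorem lintegral_exp_neg_mul_sq_gaussianReal {c : ℝ} (hc : -1 < c) :
    ∫⁻ x, ENNReal.ofReal (rexp (-(c / 2) * x ^ 2)) ∂(gaussianReal 0 1) =
      ENNReal.ofReal (√(1 + c))⁻¹ := by
  have hc' : 0 < (1 + c) / 2 := by linarith
  have hmul (x : ℝ) : gaussianPDF 0 1 x * ENNReal.ofReal (rexp (-(c / 2) * x ^ 2)) =
      ENNReal.ofReal ((√(2 * π))⁻¹ * rexp (-((1 + c) / 2) * x ^ 2)) := by
    rw [gaussianPDF, ← ENNReal.ofReal_mul (gaussianPDFReal_nonneg _ _ _), gaussianPDFReal_zero_one,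
      mul_assoc, ← exp_add]
    ring_nf
  simp only [lintegral_gaussianReal, hmul]
  rw [← ofReal_integral_eq_lintegral_ofReal ((integrable_exp_neg_mul_sq hc').const_mul _)
    (.of_forall fun x => by positivity), integral_const_mul, integral_gaussian, ← sqrt_inv,
    ← sqrt_inv, ← sqrt_mul (by positivity)]
  congr 2
  field_simp

theorem lintegral_eval_gaussianVector {ι : Type*} [Fintype ι] (i : ι) {f : ℝ → ENNReal}
    (hf : Measurable f) :
    ∫⁻ x, f (x i) ∂(gaussianVector ι) = ∫⁻ x, f x ∂(gaussianReal 0 1) :=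
  (measurePreserving_eval _ i).lintegral_comp hf

theorem lintegral_prod_gaussianVector {ι : Type*} [Fintype ι] {f : ι → ℝ → ENNReal}
    (hf : ∀ i, Measurable (f i)) :
    ∫⁻ x, ∏ i, f i (x i) ∂(gaussianVector ι) = ∏ i, ∫⁻ x, f i x ∂(gaussianReal 0 1) := by
  rw [lintegral_prod_eq_prod_lintegral_of_indepFun _ _ (iIndepFun_pi fun i => (hf i).aemeasurable)
    fun i => (hf i).comp (measurable_pi_apply i)]
  exact Finset.prod_congr rfl fun i _ => lintegral_eval_gaussianVector i (hf i)

theorem lintegral_gaussianReal_le_of_abs_eq {I : Set ℝ} (hI : MeasurableSet I) {f f' : ℝ → ℝ}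
    (hf : ∀ σ ∈ I, HasDerivWithinAt f (f' σ) I σ) (hinj : Set.InjOn f I) {g h : ℝ → ENNReal}
    (hgh : ∀ x ≠ 0, h x ≠ 0 → ∃ σ ∈ I, |x| = f σ ∧ h x ≤ g σ) :
    ∫⁻ x, h x ∂(gaussianReal 0 1) ≤
      2 * ∫⁻ σ in I, ENNReal.ofReal |f' σ| * (gaussianPDF 0 1 (f σ) * g σ) := by
  let H (y : ℝ) : ENNReal := ⨆ σ ∈ {σ ∈ I | f σ = y}, g σ
  have hle : ∀ x ≠ 0, h x ≤ H |x| := fun x hx => by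
    by_cases h0 : h x = 0
    · exact h0 ▸ zero_le
    · obtain ⟨σ, hσ, hxσ, hle⟩ := hgh x hx h0
      exact hle.trans (le_iSup₂_of_le σ ⟨hσ, hxσ.symm⟩ le_rfl)
  have himage : MeasurableSet (f '' I) :=
    hI.image_of_continuousOn_injOn (fun σ hσ => (hf σ hσ).continuousWithinAt) hinj
  have hsupp : (f '' I).indicator (fun y => gaussianPDF 0 1 y * H y) =
      fun y => gaussianPDF 0 1 y * H y := Set.indicator_eq_self.2 fun y hy => by
    by_contra hyI
    refine hy (mul_eq_zero_of_right _ (le_zero_iff.1 (iSup₂_le fun σ hσ => ?_)))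
    exact absurd ⟨σ, hσ⟩ hyI
  have hH : ∀ σ ∈ I, H (f σ) ≤ g σ := fun σ hσ =>
    iSup₂_le fun τ hτ => (congrArg g (hinj hτ.1 hσ hτ.2)).le
  calc ∫⁻ x, h x ∂(gaussianReal 0 1)
      ≤ ∫⁻ x, H |x| ∂(gaussianReal 0 1) := by
        have := nullSingletonClass_gaussianReal (μ := 0) one_ne_zero
        exact lintegral_mono_ae ((Measure.ae_ne _ 0).mono hle)
    _ ≤ 2 * ∫⁻ y, gaussianPDF 0 1 y * H y := by
        rw [lintegral_gaussianReal_comp_abs]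
        exact mul_le_mul_right (setLIntegral_le_lintegral _ _) 2
    _ = 2 * ∫⁻ σ in I, ENNReal.ofReal |f' σ| * (gaussianPDF 0 1 (f σ) * H (f σ)) := by
        rw [← lintegral_image_eq_lintegral_abs_deriv_mul hI hf hinj
          fun y => gaussianPDF 0 1 y * H y, ← lintegral_indicator himage, hsupp]
    _ ≤ 2 * ∫⁻ σ in I, ENNReal.ofReal |f' σ| * (gaussianPDF 0 1 (f σ) * g σ) := by
        refine mul_le_mul_right (setLIntegral_mono' hI fun σ hσ => ?_) 2
        gcongr
        exact hH σ hσ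

end GaussianIntegrals

section SecularChangeOfVariables

variable {m : ℕ} {ν w : Fin m → ℝ} {σ : ℝ}

theorem one_le_secularWeight (hσ : σ ∈ secularDomain ν) : 1 ≤ secularWeight ν w σ := by
  rw [secularWeight_eq hσ]
  exact le_add_of_le_of_nonneg (one_le_secularSum hσ) <|
    mul_nonneg (sq_nonneg σ) (Finset.sum_nonneg fun j _ => by positivity)

theorem hasDerivAt_secularSum (hσ : σ ∈ secularDomain ν) :
    HasDerivAt (secularSum ν w) (2 * σ * ∑ j, w j ^ 2 / (ν j - σ ^ 2) ^ 2) σ := by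
  unfold secularSum
  rw [Finset.mul_sum]
  refine (HasDerivAt.fun_sum fun j _ => ?_).const_add _
  have hsub : HasDerivAt (fun σ : ℝ => ν j - σ ^ 2) (-(2 * σ)) σ := by
    simpa using (hasDerivAt_pow 2 σ).const_sub (ν j)
  have hdiv := (hsub.fun_inv (sub_ne_zero.2 (hσ.2 j).ne')).const_mul (w j ^ 2)
  simp only [← div_eq_mul_inv] at hdiv
  exact hdiv.congr_deriv (by ring)

theorem hasDerivAt_secularRadius (hσ : σ ∈ secularDomain ν) :
    HasDerivAt (secularRadius ν w) (secularWeight ν w σ / √(secularSum ν w σ)) σ := by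
  have hS : 0 < secularSum ν w σ := zero_lt_one.trans_le (one_le_secularSum hσ)
  refine ((hasDerivAt_id σ).mul ((hasDerivAt_secularSum hσ).sqrt hS.ne')).congr_deriv ?_
  rw [secularWeight_eq hσ, add_div, div_sqrt, id]
  field_simp

theorem strictMonoOn_secularRadius : StrictMonoOn (secularRadius ν w) (secularDomain ν) := by
  intro σ hσ τ hτ hστ
  have hpos := hσ.1.le
  have hS : 0 < secularSum ν w τ := zero_lt_one.trans_le (one_le_secularSum hτ)
  have hle : secularSum ν w σ ≤ secularSum ν w τ := by
    unfold secularSum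
    gcongr with j
    exact sub_pos.2 (hτ.2 j)
  calc σ * √(secularSum ν w σ) ≤ σ * √(secularSum ν w τ) := by gcongr
    _ < τ * √(secularSum ν w τ) := by gcongr

theorem measurableSet_secularDomain : MeasurableSet (secularDomain ν) :=
  (measurableSet_lt measurable_const measurable_id).inter <|
    (MeasurableSet.iInter fun j => measurableSet_lt (by fun_prop) measurable_const).congr
      (Set.ofPred_forall _).symm

theorem sqrt_secularWeight_div_sqrt_secularSum_le (hσ : σ ∈ secularDomain ν) :
    √(secularWeight ν w σ) / √(secularSum ν w σ) ≤ ∏ j, √(ν j / (ν j - σ ^ 2)) := by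
  have hsub (j) : 0 < ν j - σ ^ 2 := sub_pos.2 (hσ.2 j)
  have hone (j) : 1 ≤ ν j / (ν j - σ ^ 2) := (one_le_div (hsub j)).2 (by nlinarith [sq_nonneg σ])
  have hprod : 1 ≤ ∏ j, ν j / (ν j - σ ^ 2) := Finset.one_le_prod fun j _ => hone j
  have hS := one_le_secularSum (w := w) hσ
  rw [← sqrt_prod _ fun j _ => zero_le_one.trans (hone j), div_le_iff₀ (by positivity),
    ← sqrt_mul (by positivity)]
  refine sqrt_le_sqrt ?_
  rw [secularWeight, secularSum, mul_add, mul_one, Finset.mul_sum]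
  gcongr with j
  have hle : ν j / (ν j - σ ^ 2) ≤ ∏ j, ν j / (ν j - σ ^ 2) := by
    rw [← Finset.mul_prod_erase _ _ (Finset.mem_univ j)]
    exact le_mul_of_one_le_right (zero_le_one.trans (hone j))
      (Finset.one_le_prod fun j _ => hone j)
  calc w j ^ 2 * ν j / (ν j - σ ^ 2) ^ 2
      = ν j / (ν j - σ ^ 2) * (w j ^ 2 / (ν j - σ ^ 2)) := by field_simp
    _ ≤ _ := by
      have := (hsub j).le
      gcongr

theorem gaussianPDFReal_secularRadius_le (hσ : σ ∈ secularDomain ν) :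
    gaussianPDFReal 0 1 (secularRadius ν w σ) ≤
      (√(2 * π))⁻¹ * ∏ j, rexp (-(σ ^ 2 / (ν j - σ ^ 2) / 2) * w j ^ 2) := by
  have hsum : σ ^ 2 * secularSum ν w σ =
      σ ^ 2 + 2 * ∑ j, σ ^ 2 / (ν j - σ ^ 2) / 2 * w j ^ 2 := by
    rw [secularSum, mul_add, mul_one, Finset.mul_sum, Finset.mul_sum]
    congr 1
    exact Finset.sum_congr rfl fun j _ => by ring
  rw [gaussianPDFReal_zero_one, sq_secularRadius hσ, hsum, ← exp_sum]
  simp only [neg_mul, Finset.sum_neg_distrib]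
  gcongr
  nlinarith [sq_nonneg σ]

theorem abs_deriv_secularRadius_mul_gaussianPDF_le (hσ : σ ∈ secularDomain ν) :
    ENNReal.ofReal |secularWeight ν w σ / √(secularSum ν w σ)| *
        (gaussianPDF 0 1 (secularRadius ν w σ) * ENNReal.ofReal (√(secularWeight ν w σ))⁻¹) ≤
      ENNReal.ofReal (√(2 * π))⁻¹ * ∏ j, ENNReal.ofReal (√(ν j / (ν j - σ ^ 2))) *
        ENNReal.ofReal (rexp (-(σ ^ 2 / (ν j - σ ^ 2) / 2) * w j ^ 2)) := by
  have hW : 0 < secularWeight ν w σ := zero_lt_one.trans_le (one_le_secularWeight hσ)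
  have hdiv : secularWeight ν w σ / √(secularSum ν w σ) *
      (gaussianPDFReal 0 1 (secularRadius ν w σ) * (√(secularWeight ν w σ))⁻¹) =
      √(secularWeight ν w σ) / √(secularSum ν w σ) *
        gaussianPDFReal 0 1 (secularRadius ν w σ) := by
    have := sq_sqrt hW.le
    field_simp
    rw [this, mul_comm]
  simp only [← ENNReal.ofReal_mul (sqrt_nonneg _)]
  rw [gaussianPDF, abs_of_nonneg (by positivity),
    ← ENNReal.ofReal_mul (gaussianPDFReal_nonneg _ _ _), ← ENNReal.ofReal_mul (by positivity), hdiv,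
    ← ENNReal.ofReal_prod_of_nonneg fun j _ => by positivity, ← ENNReal.ofReal_mul (by positivity),
    Finset.prod_mul_distrib, mul_left_comm]
  gcongr
  · exact gaussianPDFReal_nonneg _ _ _
  · exact sqrt_secularWeight_div_sqrt_secularSum_le hσ
  · exact gaussianPDFReal_secularRadius_le hσ

theorem lintegral_prod_sqrt_mul_exp_gaussianVector (hσ : σ ∈ secularDomain ν) :
    ∫⁻ w, ∏ j, ENNReal.ofReal (√(ν j / (ν j - σ ^ 2))) *
        ENNReal.ofReal (rexp (-(σ ^ 2 / (ν j - σ ^ 2) / 2) * w j ^ 2)) ∂(gaussianVector (Fin m)) =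
      1 := by
  rw [lintegral_prod_gaussianVector (f := fun j x => ENNReal.ofReal (√(ν j / (ν j - σ ^ 2))) *
    ENNReal.ofReal (rexp (-(σ ^ 2 / (ν j - σ ^ 2) / 2) * x ^ 2))) fun j => by fun_prop]
  refine Finset.prod_eq_one fun j _ => ?_
  have hsub : 0 < ν j - σ ^ 2 := sub_pos.2 (hσ.2 j)
  have hν : 0 < ν j := (pow_pos hσ.1 2).trans (hσ.2 j)
  rw [lintegral_const_mul _ (by fun_prop), lintegral_exp_neg_mul_sq_gaussianReal
      (neg_one_lt_zero.trans_le (by positivity)),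
    ← ENNReal.ofReal_mul (by positivity), show 1 + σ ^ 2 / (ν j - σ ^ 2) = ν j / (ν j - σ ^ 2) by
      field_simp; ring,
    mul_inv_cancel₀ (by positivity), ENNReal.ofReal_one]

end SecularChangeOfVariables

theorem lintegral_pi_eq_lintegral_insertNth {m : ℕ} {α : Type*} [MeasurableSpace α] {μ : Measure α}
    [SigmaFinite μ] (i : Fin (m + 1)) {f : (Fin (m + 1) → α) → ENNReal} (hf : Measurable f) :
    ∫⁻ a, f a ∂(Measure.pi fun _ => μ) =
      ∫⁻ w, ∫⁻ x, f (i.insertNth x w) ∂μ ∂(Measure.pi fun _ => μ) := by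
  have hsplit := (measurePreserving_piFinSuccAbove (fun _ => μ) i).symm
  rw [← hsplit.lintegral_comp hf]
  exact lintegral_prod_symm' _ (hf.comp hsplit.measurable)

section TruncatedOverlap

variable {d : ℕ} (s : ℝ)

/-- The overlap `leastLeftOverlap Z r` on the event that the smallest singular value of `Z` is at
most `s`, and zero elsewhere. -/
noncomputable def truncatedOverlap (Z : Matrix (Fin d) (Fin d) ℝ) (r : Fin d → ℝ) : ENNReal :=
  {Z | smallestSingularValue Z ≤ s}.indicator (leastLeftOverlap · r) Z

theorem measurableSet_setOf_smallestSingularValue_le :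
    MeasurableSet {Z : Fin d → Fin d → ℝ | smallestSingularValue (of Z) ≤ s} :=
  measurableSet_le continuous_smallestSingularValue.measurable measurable_const

theorem measurable_truncatedOverlap [NeZero d] :
    Measurable fun p : (Fin d → Fin d → ℝ) × (Fin d → ℝ) => truncatedOverlap s (of p.1) p.2 :=
  measurable_leastLeftOverlap.indicator
    (measurable_fst (measurableSet_setOf_smallestSingularValue_le s))

variable {s}

theorem measurable_truncatedOverlap_left [NeZero d] (r : Fin d → ℝ) :
    Measurable fun Z : Fin d → Fin d → ℝ => truncatedOverlap s (of Z) r := by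
  have hcomp := (measurable_truncatedOverlap (d := d) s).comp (measurable_prodMk_right (y := r))
  exact hcomp

theorem truncatedOverlap_smul (Z : Matrix (Fin d) (Fin d) ℝ) {c : ℝ} (hc : 0 ≤ c)
    (r : Fin d → ℝ) : truncatedOverlap s Z (c • r) = ENNReal.ofReal c * truncatedOverlap s Z r := by
  simp only [truncatedOverlap, leastLeftOverlap_smul _ hc, Set.indicator_const_mul]

theorem truncatedOverlap_orthogonal_mul (Z : Matrix (Fin d) (Fin d) ℝ)
    {U : Matrix (Fin d) (Fin d) ℝ} (hU : U ∈ orthogonalGroup (Fin d) ℝ) (r : Fin d → ℝ) :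
    truncatedOverlap s (U * Z) (U *ᵥ r) = truncatedOverlap s Z r := by
  simp only [truncatedOverlap, Set.indicator, Set.mem_ofPred_eq,
    smallestSingularValue_orthogonal_mul Z hU, leastLeftOverlap_orthogonal_mul Z hU]

theorem truncatedOverlap_mul_orthogonal (Z : Matrix (Fin d) (Fin d) ℝ)
    {U : Matrix (Fin d) (Fin d) ℝ} (hU : U ∈ orthogonalGroup (Fin d) ℝ) (r : Fin d → ℝ) :
    truncatedOverlap s (Z * U) r = truncatedOverlap s Z r := by
  simp only [truncatedOverlap, leastLeftOverlap, Set.indicator, Set.mem_ofPred_eq,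
    smallestSingularValue_mul_orthogonal Z hU, leastLeftSingularVectors_mul_orthogonal Z hU]

variable {m : ℕ} {B : Matrix (Fin m) (Fin (m + 1)) ℝ} {i₀ : Fin (m + 1)} {ν w : Fin m → ℝ}

theorem lintegral_truncatedOverlap_consRow_insertNth_le
    (hB : Bᵀ * B = diagonal (i₀.insertNth 0 ν)) (hw : ∀ j, w j ≠ 0) :
    ∫⁻ x, truncatedOverlap s (consRow (i₀.insertNth x w) B) (Pi.single 0 1) ∂(gaussianReal 0 1) ≤
      2 * ∫⁻ σ in secularDomain ν ∩ Set.Iic s, ENNReal.ofReal (√(2 * π))⁻¹ *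
        ∏ j, ENNReal.ofReal (√(ν j / (ν j - σ ^ 2))) *
          ENNReal.ofReal (rexp (-(σ ^ 2 / (ν j - σ ^ 2) / 2) * w j ^ 2)) := by
  have hI : MeasurableSet (secularDomain ν ∩ Set.Iic s) :=
    measurableSet_secularDomain.inter measurableSet_Iic
  refine (lintegral_gaussianReal_le_of_abs_eq hI
    (fun σ hσ => (hasDerivAt_secularRadius (w := w) hσ.1).hasDerivWithinAt)
    (strictMonoOn_secularRadius.injOn.mono Set.inter_subset_left)
    (g := fun σ => ENNReal.ofReal (√(secularWeight ν w σ))⁻¹) fun x hx hne => ?_).trans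
    (mul_le_mul_right (setLIntegral_mono' hI fun σ hσ =>
      abs_deriv_secularRadius_mul_gaussianPDF_le hσ.1) 2)
  have hs := Set.mem_of_indicator_ne_zero hne
  rw [truncatedOverlap, Set.indicator_of_mem hs] at hne ⊢
  obtain ⟨u, hu, hoverlap⟩ :=
    exists_leastLeftOverlap_eq (consRow (i₀.insertNth x w) B) (Pi.single 0 1)
  rw [hoverlap, dotProduct_single_one] at hne ⊢
  have hu0 : u 0 ≠ 0 := fun h => hne (by simp [h])
  exact ⟨_, ⟨smallestSingularValue_consRow_mem_secularDomain hB hx hw hu hu0, hs⟩,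
    abs_eq_secularRadius hB hx hw hu hu0,
    (congrArg ENNReal.ofReal (abs_apply_zero_eq_inv_sqrt_secularWeight hB hx hw hu hu0)).le⟩

theorem measurable_truncatedOverlap_consRow (B : Matrix (Fin m) (Fin (m + 1)) ℝ)
    (r : Fin (m + 1) → ℝ) : Measurable fun a => truncatedOverlap s (consRow a B) r := by
  have hcons : Measurable fun a : Fin (m + 1) → ℝ =>
      (Fin.cons a B : Fin (m + 1) → Fin (m + 1) → ℝ) :=
    measurable_pi_lambda _ fun i => by
      refine Fin.cases measurable_id (fun j => ?_) i
      exact measurable_const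
  exact (measurable_truncatedOverlap_left r).comp hcons

theorem ae_gaussianVector_forall_ne_zero {ι : Type*} [Fintype ι] :
    ∀ᵐ w ∂(gaussianVector ι), ∀ j, w j ≠ 0 := by
  have := nullSingletonClass_gaussianReal (μ := 0) one_ne_zero
  exact ae_all_iff.2 fun j =>
    (measurePreserving_eval _ j).quasiMeasurePreserving.ae (Measure.ae_ne _ 0)

theorem lintegral_truncatedOverlap_consRow_le_of_eq_diagonal
    (hB : Bᵀ * B = diagonal (i₀.insertNth 0 ν)) :
    ∫⁻ a, truncatedOverlap s (consRow a B) (Pi.single 0 1) ∂(gaussianVector (Fin (m + 1))) ≤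
      2 * (ENNReal.ofReal (√(2 * π))⁻¹ * ENNReal.ofReal s) := by
  have hI : MeasurableSet (secularDomain ν ∩ Set.Iic s) :=
    measurableSet_secularDomain.inter measurableSet_Iic
  rw [lintegral_pi_eq_lintegral_insertNth i₀ (measurable_truncatedOverlap_consRow B _)]
  refine (lintegral_mono_ae (ae_gaussianVector_forall_ne_zero.mono fun w hw =>
    lintegral_truncatedOverlap_consRow_insertNth_le hB hw)).trans ?_
  rw [lintegral_const_mul' _ _ (by simp), lintegral_lintegral_swap (by fun_prop)]
  gcongr
  calc ∫⁻ σ in secularDomain ν ∩ Set.Iic s, ∫⁻ w, _ ∂_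
      = ∫⁻ _ in secularDomain ν ∩ Set.Iic s, ENNReal.ofReal (√(2 * π))⁻¹ :=
        setLIntegral_congr_fun hI fun σ hσ => by
          rw [lintegral_const_mul _ (by fun_prop), lintegral_prod_sqrt_mul_exp_gaussianVector hσ.1,
            mul_one]
    _ ≤ ENNReal.ofReal (√(2 * π))⁻¹ * volume (Set.Ioc 0 s) := by
        rw [setLIntegral_const]
        gcongr
        exact fun σ hσ => ⟨hσ.1.1, hσ.2⟩
    _ = ENNReal.ofReal (√(2 * π))⁻¹ * ENNReal.ofReal s := by rw [volume_Ioc, sub_zero]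

theorem lintegral_truncatedOverlap_consRow_le (B : Matrix (Fin m) (Fin (m + 1)) ℝ) :
    ∫⁻ a, truncatedOverlap s (consRow a B) (Pi.single 0 1) ∂(gaussianVector (Fin (m + 1))) ≤
      2 * (ENNReal.ofReal (√(2 * π))⁻¹ * ENNReal.ofReal s) := by
  obtain ⟨U, hU, μ, i₀, hdiag, hμ⟩ :=
    exists_mem_orthogonalGroup_transpose_mul_self_eq_diagonal B (by simp)
  have hU' : Uᵀ ∈ orthogonalGroup (Fin (m + 1)) ℝ := transpose_mem_unitaryGroup_iff.2 hU
  rw [← i₀.insertNth_self_removeNth μ, hμ] at hdiag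
  have hrot (a) : truncatedOverlap s (consRow a B) (Pi.single 0 1) =
      truncatedOverlap s (consRow (Uᵀ *ᵥ a) (B * U)) (Pi.single 0 1) := by
    rw [← truncatedOverlap_mul_orthogonal _ hU, consRow_mul, mulVec_transpose]
  simp only [hrot]
  rw [(measurePreserving_mulVec_gaussianVector hU').lintegral_comp
    (measurable_truncatedOverlap_consRow (B * U) _)]
  exact lintegral_truncatedOverlap_consRow_le_of_eq_diagonal hdiag

theorem lintegral_truncatedOverlap_single_le :
    ∫⁻ Z, truncatedOverlap s (of Z) (Pi.single 0 1) ∂(gaussianMatrix (Fin (m + 1)) (Fin (m + 1))) ≤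
      2 * (ENNReal.ofReal (√(2 * π))⁻¹ * ENNReal.ofReal s) := by
  rw [lintegral_pi_eq_lintegral_insertNth 0 (measurable_truncatedOverlap_left _)]
  refine (lintegral_mono fun B => ?_).trans_eq (by rw [lintegral_const, measure_univ, mul_one])
  refine le_of_eq_of_le (lintegral_congr fun a => ?_) (lintegral_truncatedOverlap_consRow_le (of B))
  exact congrArg (fun Z => truncatedOverlap s (of Z) _) (Fin.insertNth_zero' a B)

theorem lintegral_truncatedOverlap_le (r : Fin (m + 1) → ℝ) :
    ∫⁻ Z, truncatedOverlap s (of Z) r ∂(gaussianMatrix (Fin (m + 1)) (Fin (m + 1))) ≤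
      ENNReal.ofReal √(r ⬝ᵥ r) * (2 * (ENNReal.ofReal (√(2 * π))⁻¹ * ENNReal.ofReal s)) := by
  obtain ⟨v, hv, hr⟩ := exists_dotProduct_self_eq_one_and_smul_eq r
  obtain ⟨U, hU, rfl⟩ := exists_mem_orthogonalGroup_mulVec_eq
    (e := (Pi.single 0 1 : Fin (m + 1) → ℝ)) (by simp) hv
  nth_rw 1 [← hr]
  simp only [truncatedOverlap_smul _ (sqrt_nonneg _)]
  rw [lintegral_const_mul _ (measurable_truncatedOverlap_left _),
    ← (measurePreserving_mul_gaussianMatrix hU).lintegral_comp (measurable_truncatedOverlap_left _)]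
  have hrot (Z : Fin (m + 1) → Fin (m + 1) → ℝ) :
      truncatedOverlap s (of fun i j => (U * of Z) i j) (U *ᵥ Pi.single 0 1) =
        truncatedOverlap s (of Z) (Pi.single 0 1) :=
    truncatedOverlap_orthogonal_mul (of Z) hU _
  simp only [hrot]
  gcongr
  exact lintegral_truncatedOverlap_single_le

end TruncatedOverlap

section GaussianMoments

theorem lintegral_abs_gaussianReal :
    ∫⁻ x, ENNReal.ofReal |x| ∂(gaussianReal 0 1) = 2 * ENNReal.ofReal (√(2 * π))⁻¹ := by
  have hmoment : ∫ x in Set.Ioi (0 : ℝ), x ^ (1 : ℝ) * rexp (-(1 / 2) * x ^ (2 : ℝ)) = 1 := by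
    rw [integral_rpow_mul_exp_neg_mul_rpow (by simp) (by simp) (by simp)]
    norm_num [rpow_neg_one]
  have hint : IntegrableOn (fun x : ℝ => x ^ (1 : ℝ) * rexp (-(1 / 2) * x ^ (2 : ℝ))) (Set.Ioi 0) :=
    by_contra fun h => one_ne_zero (hmoment.symm.trans (integral_undef h))
  rw [lintegral_gaussianReal_comp_abs]
  congr 1
  calc ∫⁻ x in Set.Ioi 0, gaussianPDF 0 1 x * ENNReal.ofReal x
      = ∫⁻ x in Set.Ioi (0 : ℝ), ENNReal.ofReal (√(2 * π))⁻¹ *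
          ENNReal.ofReal (x ^ (1 : ℝ) * rexp (-(1 / 2) * x ^ (2 : ℝ))) := by
        refine lintegral_congr fun x => ?_
        rw [gaussianPDF, gaussianPDFReal_zero_one, ← ENNReal.ofReal_mul (by positivity),
          ← ENNReal.ofReal_mul (by positivity), rpow_one, rpow_two, mul_assoc, mul_comm x]
    _ = ENNReal.ofReal (√(2 * π))⁻¹ := by
        rw [lintegral_const_mul' _ _ ENNReal.ofReal_ne_top,
          ← ofReal_integral_eq_lintegral_ofReal hint, hmoment, ENNReal.ofReal_one, mul_one]
        exact (ae_restrict_iff' measurableSet_Ioi).2 <|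
          .of_forall fun x (hx : 0 < x) => by positivity

theorem lintegral_dotProduct_self_gaussianVector {ι : Type*} [Fintype ι] :
    ∫⁻ r, ENNReal.ofReal (r ⬝ᵥ r) ∂(gaussianVector ι) = Fintype.card ι := by
  have hsq : ∫⁻ x, ENNReal.ofReal (x ^ 2) ∂(gaussianReal 0 1) = 1 := by
    have hvar := variance_id_gaussianReal (μ := 0) (v := 1)
    rw [variance_of_integral_eq_zero aemeasurable_id (by simp)] at hvar
    rw [← ofReal_integral_eq_lintegral_ofReal (f := fun x => x ^ 2)
      (memLp_id_gaussianReal 2).integrable_sq (.of_forall fun x => sq_nonneg x)]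
    simpa using congrArg ENNReal.ofReal hvar
  have hcoord (i : ι) : ∫⁻ r, ENNReal.ofReal (r i ^ 2) ∂(gaussianVector ι) = 1 :=
    (lintegral_eval_gaussianVector i (f := fun x => ENNReal.ofReal (x ^ 2)) (by fun_prop)).trans hsq
  simp only [← sum_sq_eq_dotProduct_self, ENNReal.ofReal_sum_of_nonneg fun _ _ => sq_nonneg _]
  rw [lintegral_finsetSum _ fun _ _ => by fun_prop]
  simp [hcoord]

theorem lintegral_sqrt_dotProduct_self_gaussianVector_le {ι : Type*} [Fintype ι] :
    ∫⁻ r, ENNReal.ofReal √(r ⬝ᵥ r) ∂(gaussianVector ι) ≤ ENNReal.ofReal √(Fintype.card ι) := by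
  cases isEmpty_or_nonempty ι
  · simp
  have hcard : (0 : ℝ) < Fintype.card ι := Nat.cast_pos.2 Fintype.card_pos
  set n : ℝ := (Fintype.card ι : ℝ)
  have hamgm (r : ι → ℝ) : ENNReal.ofReal √(r ⬝ᵥ r) ≤
      ENNReal.ofReal (2 * √n)⁻¹ * ENNReal.ofReal (r ⬝ᵥ r) + ENNReal.ofReal (√n / 2) := by
    rw [← ENNReal.ofReal_mul (by positivity), ← ENNReal.ofReal_add
      (mul_nonneg (by positivity) (real_dotProduct_self_nonneg r)) (by positivity)]
    refine ENNReal.ofReal_le_ofReal ?_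
    nth_rw 2 [← sq_sqrt (real_dotProduct_self_nonneg r)]
    field_simp
    nlinarith [sq_nonneg (√(r ⬝ᵥ r) - √n)]
  refine (lintegral_mono hamgm).trans_eq ?_
  rw [lintegral_add_right _ measurable_const, lintegral_const_mul' _ _ (by finiteness),
    lintegral_dotProduct_self_gaussianVector, lintegral_const, measure_univ, mul_one,
    ← ENNReal.ofReal_natCast, ← ENNReal.ofReal_mul (by positivity),
    ← ENNReal.ofReal_add (by positivity) (by positivity)]
  congr 1
  have := sq_sqrt hcard.le
  field_simp
  linarith

theorem lintegral_ofReal_abs_dotProduct_gaussianVector {ι : Type*} [Fintype ι]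
    {u : ι → ℝ} (hu : u ⬝ᵥ u = 1) :
    ∫⁻ r, ENNReal.ofReal |u ⬝ᵥ r| ∂(gaussianVector ι) = 2 * ENNReal.ofReal (√(2 * π))⁻¹ := by
  classical
  obtain ⟨i, -⟩ : ∃ i, u i ≠ 0 := Function.ne_iff.1 fun h : u = 0 => by simp [h] at hu
  obtain ⟨U, hU, rfl⟩ :=
    exists_mem_orthogonalGroup_mulVec_eq (e := (Pi.single i 1 : ι → ℝ)) (by simp) hu
  have hcont : Continuous fun r => (U *ᵥ Pi.single i 1) ⬝ᵥ r := by fun_prop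
  rw [← (measurePreserving_mulVec_gaussianVector hU).lintegral_comp
    (hcont.abs.measurable.ennreal_ofReal)]
  simp only [mulVec_dotProduct_mulVec_of_mem_orthogonalGroup hU, single_one_dotProduct]
  exact (lintegral_eval_gaussianVector i (f := fun x => ENNReal.ofReal |x|) (by fun_prop)).trans
    lintegral_abs_gaussianReal

end GaussianMoments

theorem le_lintegral_leastLeftOverlap {d : ℕ} [NeZero d] (Z : Matrix (Fin d) (Fin d) ℝ) :
    2 * ENNReal.ofReal (√(2 * π))⁻¹ ≤ ∫⁻ r, leastLeftOverlap Z r ∂(gaussianVector (Fin d)) := by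
  obtain ⟨u, hu⟩ := leastLeftSingularVectors_nonempty Z
  rw [← lintegral_ofReal_abs_dotProduct_gaussianVector hu.1]
  exact lintegral_mono fun r => le_iSup₂_of_le u hu le_rfl

theorem gaussianMatrix_setOf_smallestSingularValue_le_le {d : ℕ} [NeZero d] (s : ℝ) :
    gaussianMatrix (Fin d) (Fin d) {Z | smallestSingularValue (of Z) ≤ s} ≤
      ENNReal.ofReal √d * ENNReal.ofReal s := by
  obtain ⟨m, rfl⟩ := Nat.exists_eq_succ_of_ne_zero (NeZero.ne d)
  set c : ENNReal := 2 * ENNReal.ofReal (√(2 * π))⁻¹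
  have hc0 : c ≠ 0 := by positivity
  have hct : c ≠ ⊤ := by finiteness
  refine (ENNReal.mul_le_mul_iff_right hc0 hct).1 ?_
  calc c * gaussianMatrix _ _ {Z | smallestSingularValue (of Z) ≤ s}
      = ∫⁻ _ in {Z | smallestSingularValue (of Z) ≤ s}, c ∂(gaussianMatrix _ _) := by
        rw [setLIntegral_const]
    _ ≤ ∫⁻ Z in {Z | _},
          ∫⁻ r, truncatedOverlap s (of Z) r ∂(gaussianVector _) ∂(gaussianMatrix _ _) :=
        setLIntegral_mono' (measurableSet_setOf_smallestSingularValue_le s) fun Z hZ =>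
          (le_lintegral_leastLeftOverlap (of Z)).trans_eq <| lintegral_congr fun r =>
            (Set.indicator_of_mem (f := (leastLeftOverlap · r)) hZ).symm
    _ ≤ ∫⁻ Z, ∫⁻ r, truncatedOverlap s (of Z) r ∂(gaussianVector _) ∂(gaussianMatrix _ _) :=
        setLIntegral_le_lintegral _ _
    _ = ∫⁻ r, ∫⁻ Z, truncatedOverlap s (of Z) r ∂(gaussianMatrix _ _) ∂(gaussianVector _) :=
        lintegral_lintegral_swap (measurable_truncatedOverlap s).aemeasurable
    _ ≤ ∫⁻ r, ENNReal.ofReal √(r ⬝ᵥ r) *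
          (2 * (ENNReal.ofReal (√(2 * π))⁻¹ * ENNReal.ofReal s)) ∂(gaussianVector _) :=
        lintegral_mono lintegral_truncatedOverlap_le
    _ = (∫⁻ r, ENNReal.ofReal √(r ⬝ᵥ r) ∂(gaussianVector _)) * (c * ENNReal.ofReal s) := by
        rw [lintegral_mul_const' _ _ (by finiteness), ← mul_assoc 2]
    _ ≤ c * (ENNReal.ofReal √(m + 1 : ℕ) * ENNReal.ofReal s) := by
        rw [mul_left_comm]
        gcongr
        simpa using lintegral_sqrt_dotProduct_self_gaussianVector_le (ι := Fin (m + 1))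

section GaussianIntegrationByParts

open scoped BoundedContinuousFunction

theorem hasDerivAt_gaussianPDFReal_zero_one (x : ℝ) :
    HasDerivAt (gaussianPDFReal 0 1) (-x * gaussianPDFReal 0 1 x) x := by
  have hpow : HasDerivAt (fun x : ℝ => -(1 / 2) * x ^ 2) (-x) x :=
    ((hasDerivAt_pow 2 x).const_mul (-(1 / 2))).congr_deriv (by push_cast; ring)
  simp only [funext gaussianPDFReal_zero_one]
  exact (hpow.exp.const_mul _).congr_deriv (by ring)

theorem integral_mul_gaussianReal_eq_integral_deriv {f f' : ℝ →ᵇ ℝ}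
    (hf : ∀ x, HasDerivAt f (f' x) x) :
    ∫ x, x * f x ∂(gaussianReal 0 1) = ∫ x, f' x ∂(gaussianReal 0 1) := by
  have hpdf : Integrable (gaussianPDFReal 0 1) := integrable_gaussianPDFReal 0 1
  have hmul : Integrable fun x => -x * gaussianPDFReal 0 1 x := by
    refine ((integrable_mul_exp_neg_mul_sq (b := 1 / 2) (by norm_num)).const_mul
      (-(√(2 * π))⁻¹)).congr (.of_forall fun x => ?_)
    simp only [gaussianPDFReal_zero_one]
    ring
  have hparts := integral_mul_deriv_eq_deriv_mul_of_integrable (u := f) (u' := f')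
    (fun x _ => hf x) (fun x _ => hasDerivAt_gaussianPDFReal_zero_one x)
    (hmul.bdd_mul f.continuous.aestronglyMeasurable (.of_forall f.norm_coe_le_norm))
    (hpdf.bdd_mul f'.continuous.aestronglyMeasurable (.of_forall f'.norm_coe_le_norm))
    (hpdf.bdd_mul f.continuous.aestronglyMeasurable (.of_forall f.norm_coe_le_norm))
  simp only [integral_gaussianReal_eq_integral_smul one_ne_zero, smul_eq_mul]
  rw [← neg_inj, ← integral_neg]
  simpa only [mul_assoc, mul_comm, mul_left_comm, neg_mul, mul_neg] using hparts

variable {ι : Type*} [Fintype ι]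

theorem measurePreserving_update_gaussianVector [DecidableEq ι] (i : ι) :
    MeasurePreserving (fun p : ℝ × (ι → ℝ) => Function.update p.2 i p.1)
      ((gaussianReal 0 1).prod (gaussianVector ι)) (gaussianVector ι) := by
  have hmeas : Measurable fun p : ℝ × (ι → ℝ) => Function.update p.2 i p.1 := by fun_prop
  refine ⟨hmeas, (Measure.pi_eq fun s hs => ?_).symm⟩
  have hpre : (fun p : ℝ × (ι → ℝ) => Function.update p.2 i p.1) ⁻¹' Set.univ.pi s =
      s i ×ˢ Set.univ.pi (Function.update s i Set.univ) := by
    ext p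
    simp only [Set.mem_preimage, Set.mem_univ_pi, Set.mem_prod]
    rw [Function.forall_update_iff p.2 fun j x => x ∈ s j]
    simp only [Function.update_apply]
    grind
  rw [Measure.map_apply hmeas (.univ_pi hs), hpre, Measure.prod_prod, Measure.pi_pi,
    ← Finset.mul_prod_erase _ (fun j => gaussianReal 0 1 (s j)) (Finset.mem_univ i),
    ← Finset.mul_prod_erase _ _ (Finset.mem_univ i), Function.update_self, measure_univ, one_mul]
  congr 1
  exact Finset.prod_congr rfl fun j hj => by rw [Function.update_of_ne (Finset.ne_of_mem_erase hj)]

theorem integral_gaussianVector_eq_integral_update [DecidableEq ι] (i : ι) {f : (ι → ℝ) → ℝ}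
    (hf : Integrable f (gaussianVector ι)) :
    ∫ z, f z ∂(gaussianVector ι) =
      ∫ z, ∫ x, f (Function.update z i x) ∂(gaussianReal 0 1) ∂(gaussianVector ι) := by
  have hmp := measurePreserving_update_gaussianVector i
  rw [← hmp.map_eq] at hf
  conv_lhs => rw [← hmp.map_eq, integral_map hmp.measurable.aemeasurable hf.aestronglyMeasurable]
  exact integral_prod_symm _ (hf.comp_measurable hmp.measurable)

theorem integrable_eval_gaussianVector (i : ι) :
    Integrable (fun z : ι → ℝ => z i) (gaussianVector ι) :=
  (measurePreserving_eval (fun _ : ι => gaussianReal 0 1) i).integrable_comp_of_integrable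
    ((memLp_id_gaussianReal 1).integrable le_rfl)

theorem integrable_dotProduct_gaussianVector (a : ι → ℝ) :
    Integrable (a ⬝ᵥ ·) (gaussianVector ι) :=
  integrable_finsetSum _ fun i _ => (integrable_eval_gaussianVector i).const_mul (a i)

theorem integral_eval_mul_gaussianVector_eq_integral_deriv [DecidableEq ι] (i : ι)
    {F F' : (ι → ℝ) →ᵇ ℝ}
    (hF : ∀ z x, HasDerivAt (fun x => F (Function.update z i x)) (F' (Function.update z i x)) x) :
    ∫ z, z i * F z ∂(gaussianVector ι) = ∫ z, F' z ∂(gaussianVector ι) := by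
  rw [integral_gaussianVector_eq_integral_update i ((integrable_eval_gaussianVector i).mul_bdd
      F.continuous.aestronglyMeasurable (.of_forall F.norm_coe_le_norm)),
    integral_gaussianVector_eq_integral_update i (F'.integrable _)]
  simp only [Function.update_self]
  refine integral_congr_ae <| .of_forall fun z => ?_
  let line : C(ℝ, ι → ℝ) := ⟨Function.update z i, by fun_prop⟩
  exact integral_mul_gaussianReal_eq_integral_deriv
    (f := F.compContinuous line) (f' := F'.compContinuous line) (hF z)

/-- The ridge function `z ↦ f (a ⬝ᵥ z)`: a function of the single Gaussian variable `a ⬝ᵥ z`. -/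
def ridge (f : ℝ →ᵇ ℝ) (a : ι → ℝ) : (ι → ℝ) →ᵇ ℝ :=
  f.compContinuous ⟨(a ⬝ᵥ ·), by fun_prop⟩

@[simp]
theorem ridge_apply (f : ℝ →ᵇ ℝ) (a z : ι → ℝ) : ridge f a z = f (a ⬝ᵥ z) :=
  rfl

theorem norm_ridge_le (f : ℝ →ᵇ ℝ) (a : ι → ℝ) : ‖ridge f a‖ ≤ ‖f‖ :=
  f.norm_compContinuous_le _

theorem hasDerivAt_dotProduct_update [DecidableEq ι] (a z : ι → ℝ) (i : ι) (x : ℝ) :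
    HasDerivAt (fun x => a ⬝ᵥ Function.update z i x) (a i) x :=
  (HasDerivAt.fun_sum fun j _ =>
    (hasDerivAt_pi.1 (hasDerivAt_update z i x) j).const_mul (a j)).congr_deriv
      (dotProduct_single_one a i)

variable {κ : Type*} [Fintype κ] [DecidableEq κ]

theorem hasDerivAt_prod_comp {f f' : κ → ℝ → ℝ} (hf : ∀ k x, HasDerivAt (f k) (f' k x) x)
    {c : κ → ℝ → ℝ} {c' : κ → ℝ} {x : ℝ} (hc : ∀ k, HasDerivAt (c k) (c' k) x) :
    HasDerivAt (fun x => ∏ k, f k (c k x))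
      (∑ k, c' k * (f' k (c k x) * ∏ j ∈ Finset.univ.erase k, f j (c j x))) x :=
  (HasDerivAt.fun_finsetProd fun k _ => (hf k _).comp x (hc k)).congr_deriv <|
    Finset.sum_congr rfl fun k _ => by simp only [smul_eq_mul, Function.comp_apply]; ring

theorem integral_dotProduct_mul_prod_ridge {f f' : κ → ℝ →ᵇ ℝ}
    (hf : ∀ k x, HasDerivAt (f k) (f' k x) x) (a : κ → ι → ℝ) (b : ι → ℝ) :
    ∫ z, (b ⬝ᵥ z) * (∏ k, ridge (f k) (a k)) z ∂(gaussianVector ι) =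
      ∑ k, (b ⬝ᵥ a k) * ∫ z, (ridge (f' k) (a k) * ∏ j ∈ Finset.univ.erase k, ridge (f j) (a j)) z
        ∂(gaussianVector ι) := by
  classical
  have hcoord (i : ι) : ∫ z, z i * (∏ k, ridge (f k) (a k)) z ∂(gaussianVector ι) =
      ∑ k, a k i * ∫ z, (ridge (f' k) (a k) * ∏ j ∈ Finset.univ.erase k, ridge (f j) (a j)) z
        ∂(gaussianVector ι) := by
    rw [integral_eval_mul_gaussianVector_eq_integral_deriv i (F' := ∑ k, a k i •
      (ridge (f' k) (a k) * ∏ j ∈ Finset.univ.erase k, ridge (f j) (a j))) fun z x => by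
        simpa using hasDerivAt_prod_comp hf fun k => hasDerivAt_dotProduct_update (a k) z i x]
    simp only [BoundedContinuousFunction.sum_apply, BoundedContinuousFunction.smul_apply,
      smul_eq_mul]
    rw [integral_finsetSum _ fun k _ => (BoundedContinuousFunction.integrable _ _).const_mul _]
    simp only [integral_const_mul]
  simp only [dotProduct, Finset.sum_mul, mul_assoc]
  rw [integral_finsetSum _ fun i _ => ((integrable_eval_gaussianVector i).mul_bdd
    (BoundedContinuousFunction.continuous _).aestronglyMeasurable
    (.of_forall (BoundedContinuousFunction.norm_coe_le_norm _))).const_mul _, Finset.sum_comm]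
  simp only [integral_const_mul, hcoord, Finset.mul_sum]

end GaussianIntegrationByParts

section Slepian

open scoped BoundedContinuousFunction

variable {ι κ : Type*} [Fintype ι] [Fintype κ] {u v : κ → ι → ℝ}

/-- The rotation from `a` at angle `0` to `b` at angle `π / 2`, the path along which the two
families of Slepian's inequality are compared. -/
noncomputable def rotatePath (a b : ι → ℝ) (θ : ℝ) : ι → ℝ :=
  cos θ • a + sin θ • b

theorem hasDerivAt_rotatePath_dotProduct (a b z : ι → ℝ) (θ : ℝ) :
    HasDerivAt (fun θ => rotatePath a b θ ⬝ᵥ z) (rotatePath b (-a) θ ⬝ᵥ z) θ := by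
  simp only [rotatePath, add_dotProduct, smul_dotProduct, neg_dotProduct, smul_eq_mul]
  exact (((hasDerivAt_cos θ).mul_const _).add ((hasDerivAt_sin θ).mul_const _)).congr_deriv
    (by ring)

theorem abs_rotatePath_dotProduct_le (a b z : ι → ℝ) (θ : ℝ) :
    |rotatePath a b θ ⬝ᵥ z| ≤ |a ⬝ᵥ z| + |b ⬝ᵥ z| := by
  simp only [rotatePath, add_dotProduct, smul_dotProduct, smul_eq_mul]
  refine (abs_add_le _ _).trans (add_le_add ?_ ?_) <;> rw [abs_mul]
  · exact mul_le_of_le_one_left (abs_nonneg _) (abs_cos_le_one θ)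
  · exact mul_le_of_le_one_left (abs_nonneg _) (abs_sin_le_one θ)

theorem rotatePath_neg_dotProduct_rotatePath {a b c e : ι → ℝ} (hae : a ⬝ᵥ e = 0) (hbc : b ⬝ᵥ c = 0)
    (θ : ℝ) : rotatePath b (-a) θ ⬝ᵥ rotatePath c e θ = cos θ * sin θ * (b ⬝ᵥ e - a ⬝ᵥ c) := by
  simp only [rotatePath, add_dotProduct, dotProduct_add, smul_dotProduct, dotProduct_smul,
    neg_dotProduct, smul_eq_mul, hae, hbc]
  ring

variable {h h' h'' : ℝ →ᵇ ℝ}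

theorem hasDerivAt_integral_prod_ridge_rotatePath [DecidableEq κ]
    (hh : ∀ x, HasDerivAt h (h' x) x) (θ : ℝ) :
    HasDerivAt (fun θ => ∫ z, (∏ k, ridge h (rotatePath (u k) (v k) θ)) z ∂(gaussianVector ι))
      (∑ k, ∫ z, (rotatePath (v k) (-u k) θ ⬝ᵥ z) * (ridge h' (rotatePath (u k) (v k) θ) *
        ∏ j ∈ Finset.univ.erase k, ridge h (rotatePath (u j) (v j) θ)) z
          ∂(gaussianVector ι)) θ := by
  let P (k : κ) (θ : ℝ) : (ι → ℝ) →ᵇ ℝ := ridge h' (rotatePath (u k) (v k) θ) *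
    ∏ j ∈ Finset.univ.erase k, ridge h (rotatePath (u j) (v j) θ)
  have hP (k : κ) (θ : ℝ) : ‖P k θ‖ ≤ ‖h'‖ * ∏ _j ∈ Finset.univ.erase k, ‖h‖ := by
    refine (norm_mul_le _ _).trans (mul_le_mul (norm_ridge_le _ _) ?_ (norm_nonneg _)
      (norm_nonneg _))
    exact (Finset.norm_prod_le _ _).trans
      (Finset.prod_le_prod (fun j _ => norm_nonneg _) fun j _ => norm_ridge_le _ _)
  have hint (k : κ) (θ : ℝ) : Integrable (fun z => (rotatePath (v k) (-u k) θ ⬝ᵥ z) * P k θ z)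
      (gaussianVector ι) :=
    (integrable_dotProduct_gaussianVector _).mul_bdd (P k θ).continuous.aestronglyMeasurable
      (.of_forall (P k θ).norm_coe_le_norm)
  rw [← integral_finsetSum _ fun k _ => hint k θ]
  refine (hasDerivAt_integral_of_dominated_loc_of_deriv_le Filter.univ_mem
    (F' := fun θ z => ∑ k, (rotatePath (v k) (-u k) θ ⬝ᵥ z) * P k θ z)
    (bound := fun z => ∑ k, (|v k ⬝ᵥ z| + |-u k ⬝ᵥ z|) *
      (‖h'‖ * ∏ _j ∈ Finset.univ.erase k, ‖h‖))
    (.of_forall fun θ => (BoundedContinuousFunction.continuous _).aestronglyMeasurable)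
    (BoundedContinuousFunction.integrable _ _)
    (integrable_finsetSum _ fun k _ => hint k θ).aestronglyMeasurable
    (.of_forall fun z θ _ => ?_)
    (integrable_finsetSum _ fun k _ => ((integrable_dotProduct_gaussianVector _).abs.add
      (integrable_dotProduct_gaussianVector _).abs).mul_const _)
    (.of_forall fun z θ _ => ?_)).2
  · refine (norm_sum_le _ _).trans (Finset.sum_le_sum fun k _ => ?_)
    rw [norm_mul]
    exact mul_le_mul (abs_rotatePath_dotProduct_le _ _ _ _)
      (((P k θ).norm_coe_le_norm z).trans (hP k θ)) (norm_nonneg _) (by positivity)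
  · simpa [P] using hasDerivAt_prod_comp (fun _ => hh) fun k =>
      hasDerivAt_rotatePath_dotProduct (u k) (v k) z θ

theorem integral_rotatePath_dotProduct_mul_prod_ridge_nonpos [DecidableEq κ]
    (hh : ∀ x, HasDerivAt h (h' x) x)
    (hh' : ∀ x, HasDerivAt h' (h'' x) x) (hpos : ∀ x, 0 ≤ h x) (hneg : ∀ x, h' x ≤ 0)
    (huv : ∀ k l, u k ⬝ᵥ v l = 0) (hself : ∀ k, u k ⬝ᵥ u k = v k ⬝ᵥ v k)
    (hle : ∀ k l, v k ⬝ᵥ v l ≤ u k ⬝ᵥ u l) {θ : ℝ} (hcos : 0 ≤ cos θ) (hsin : 0 ≤ sin θ)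
    (k : κ) :
    ∫ z, (rotatePath (v k) (-u k) θ ⬝ᵥ z) * (ridge h' (rotatePath (u k) (v k) θ) *
        ∏ j ∈ Finset.univ.erase k, ridge h (rotatePath (u j) (v j) θ)) z
          ∂(gaussianVector ι) ≤ 0 := by
  have hfactor : ridge h' (rotatePath (u k) (v k) θ) *
      ∏ j ∈ Finset.univ.erase k, ridge h (rotatePath (u j) (v j) θ) =
      ∏ j, ridge (Function.update (fun _ => h) k h' j) (rotatePath (u j) (v j) θ) := by
    rw [← Finset.mul_prod_erase _ _ (Finset.mem_univ k), Function.update_self]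
    congr 1
    exact Finset.prod_congr rfl fun j hj => by
      rw [Function.update_of_ne (Finset.ne_of_mem_erase hj)]
  rw [hfactor, integral_dotProduct_mul_prod_ridge
    (f' := Function.update (fun _ => h') k h'') fun j x => by
      rcases eq_or_ne j k with rfl | hj
      · simpa using hh' x
      · simpa [hj] using hh x]
  refine Finset.sum_nonpos fun l _ => ?_
  rw [rotatePath_neg_dotProduct_rotatePath (huv k l) (by rw [dotProduct_comm, huv])]
  rcases eq_or_ne l k with rfl | hlk
  · simp [hself]
  refine mul_nonpos_of_nonpos_of_nonneg (mul_nonpos_of_nonneg_of_nonpos (mul_nonneg hcos hsin)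
    (sub_nonpos.2 (hle k l))) (integral_nonneg fun z => ?_)
  rw [← Finset.mul_prod_erase _ _ (Finset.mem_erase.2 ⟨hlk.symm, Finset.mem_univ k⟩)]
  simp only [Function.update_self, Function.update_of_ne hlk, BoundedContinuousFunction.mul_apply,
    BoundedContinuousFunction.prod_apply, ridge_apply, ← mul_assoc]
  refine mul_nonneg (mul_nonneg_of_nonpos_of_nonpos (hneg _) (hneg _))
    (Finset.prod_nonneg fun j hj => ?_)
  rw [Function.update_of_ne (Finset.ne_of_mem_erase hj)]
  exact hpos _

theorem integral_prod_ridge_le_of_covariance_le (hh : ∀ x, HasDerivAt h (h' x) x)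
    (hh' : ∀ x, HasDerivAt h' (h'' x) x) (hpos : ∀ x, 0 ≤ h x) (hneg : ∀ x, h' x ≤ 0)
    (huv : ∀ k l, u k ⬝ᵥ v l = 0) (hself : ∀ k, u k ⬝ᵥ u k = v k ⬝ᵥ v k)
    (hle : ∀ k l, v k ⬝ᵥ v l ≤ u k ⬝ᵥ u l) :
    ∫ z, (∏ k, ridge h (v k)) z ∂(gaussianVector ι) ≤
      ∫ z, (∏ k, ridge h (u k)) z ∂(gaussianVector ι) := by
  classical
  have hderiv := hasDerivAt_integral_prod_ridge_rotatePath (u := u) (v := v) hh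
  have hanti := antitoneOn_of_deriv_nonpos (convex_Icc 0 (π / 2))
    (fun θ _ => (hderiv θ).continuousAt.continuousWithinAt)
    (fun θ _ => (hderiv θ).differentiableAt.differentiableWithinAt) fun θ hθ => by
      rw [interior_Icc] at hθ
      rw [(hderiv θ).deriv]
      exact Finset.sum_nonpos fun k _ => integral_rotatePath_dotProduct_mul_prod_ridge_nonpos hh hh'
        hpos hneg huv hself hle (cos_nonneg_of_mem_Icc ⟨by linarith [hθ.1, pi_pos], hθ.2.le⟩)
        (sin_nonneg_of_nonneg_of_le_pi hθ.1.le (by linarith [hθ.2, pi_pos])) k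
  simpa [rotatePath] using hanti (Set.left_mem_Icc.2 (by positivity))
    (Set.right_mem_Icc.2 (by positivity)) (by positivity : (0 : ℝ) ≤ π / 2)

/-- Mathlib's `sigmoid` as a bounded continuous function. -/
noncomputable def boundedSigmoid : ℝ →ᵇ ℝ :=
  .ofNormedAddCommGroup sigmoid continuous_sigmoid 1 fun x => by
    rw [norm_of_nonneg (sigmoid_nonneg x)]
    exact sigmoid_le_one x

theorem integral_prod_sigmoid_le_of_covariance_le (huv : ∀ k l, u k ⬝ᵥ v l = 0)
    (hself : ∀ k, u k ⬝ᵥ u k = v k ⬝ᵥ v k) (hle : ∀ k l, v k ⬝ᵥ v l ≤ u k ⬝ᵥ u l) {p : ℝ}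
    (hp : 0 ≤ p) (q t : ℝ) :
    ∫ z, ∏ k, sigmoid (p * (t - v k ⬝ᵥ z) + q) ∂(gaussianVector ι) ≤
      ∫ z, ∏ k, sigmoid (p * (t - u k ⬝ᵥ z) + q) ∂(gaussianVector ι) := by
  let A : C(ℝ, ℝ) := ⟨fun x => p * (t - x) + q, by fun_prop⟩
  have hA (x : ℝ) : HasDerivAt A (-p) x :=
    ((((hasDerivAt_id x).const_sub t).const_mul p).add_const q).congr_deriv (by ring)
  have hσ (x : ℝ) := hasDerivAt_sigmoid x
  have hσ' (x : ℝ) : HasDerivAt (fun x => sigmoid x * (1 - sigmoid x))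
      (sigmoid x * (1 - sigmoid x) * (1 - 2 * sigmoid x)) x :=
    ((hσ x).mul ((hσ x).const_sub 1)).congr_deriv (by ring)
  have hslope (x : ℝ) : 0 ≤ sigmoid x * (1 - sigmoid x) :=
    mul_nonneg (sigmoid_nonneg x) (sub_nonneg.2 (sigmoid_le_one x))
  have := integral_prod_ridge_le_of_covariance_le
    (h := boundedSigmoid.compContinuous A)
    (h' := -p • (boundedSigmoid * (1 - boundedSigmoid)).compContinuous A)
    (h'' := p ^ 2 • (boundedSigmoid * (1 - boundedSigmoid) *
      (1 - 2 • boundedSigmoid)).compContinuous A)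
    (fun x => ((hσ (A x)).comp x (hA x)).congr_deriv (mul_comm _ _))
    (fun x => (((hσ' (A x)).comp x (hA x)).const_mul (-p)).congr_deriv (by
      simp [boundedSigmoid]
      ring))
    (fun x => sigmoid_nonneg (A x))
    (fun x => mul_nonpos_of_nonpos_of_nonneg (neg_nonpos.2 hp) (hslope (A x))) huv hself hle
  simpa [boundedSigmoid, A] using this

/-- The lower-order term `n` makes the limit at `x = t` equal to `1` rather than `1 / 2`. -/
theorem tendsto_sigmoid_sq_mul_sub_add (t x : ℝ) :
    Filter.Tendsto (fun n : ℕ => sigmoid ((n : ℝ) ^ 2 * (t - x) + n)) .atTop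
      (nhds (if x ≤ t then 1 else 0)) := by
  have hn := tendsto_natCast_atTop_atTop (R := ℝ)
  split_ifs with hx
  · refine tendsto_sigmoid_atTop.comp (Filter.tendsto_atTop_mono (fun n => ?_) hn)
    exact le_add_of_nonneg_left (mul_nonneg (sq_nonneg _) (sub_nonneg.2 hx))
  · have hfactor (n : ℝ) : n ^ 2 * (t - x) + n = n * (n * (t - x) + 1) := by ring
    simp only [hfactor]
    exact tendsto_sigmoid_atBot.comp <| hn.atTop_mul_atBot₀ <|
      Filter.tendsto_atBot_add_const_right _ _ (hn.atTop_mul_const_of_neg (by linarith))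

theorem tendsto_integral_prod_sigmoid (t : ℝ) :
    Filter.Tendsto
      (fun n : ℕ => ∫ z, ∏ k, sigmoid ((n : ℝ) ^ 2 * (t - u k ⬝ᵥ z) + n)
        ∂(gaussianVector ι)) .atTop
      (nhds ((gaussianVector ι).real {z | ∀ k, u k ⬝ᵥ z ≤ t})) := by
  have hmeas : MeasurableSet {z | ∀ k, u k ⬝ᵥ z ≤ t} := by
    have (k : κ) : Measurable (u k ⬝ᵥ ·) := by fun_prop
    measurability
  rw [← integral_indicator_one hmeas]
  refine tendsto_integral_of_dominated_convergence (fun _ => 1) (fun n => ?_)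
    (integrable_const _) (fun n => .of_forall fun z => ?_) (.of_forall fun z => ?_)
  · exact Continuous.aestronglyMeasurable (by fun_prop)
  · rw [norm_of_nonneg (Finset.prod_nonneg fun _ _ => sigmoid_nonneg _)]
    exact Finset.prod_le_one (fun _ _ => sigmoid_nonneg _) fun _ _ => sigmoid_le_one _
  · have := tendsto_finsetProd Finset.univ fun k _ => tendsto_sigmoid_sq_mul_sub_add t (u k ⬝ᵥ z)
    simpa [Finset.prod_boole, Set.indicator_apply] using this

theorem gaussianVector_setOf_forall_le_le_of_covariance_le {κ : Type*} [Finite κ]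
    {u v : κ → ι → ℝ} (huv : ∀ k l, u k ⬝ᵥ v l = 0) (hself : ∀ k, u k ⬝ᵥ u k = v k ⬝ᵥ v k)
    (hle : ∀ k l, v k ⬝ᵥ v l ≤ u k ⬝ᵥ u l) (t : ℝ) :
    gaussianVector ι {z | ∀ k, v k ⬝ᵥ z ≤ t} ≤ gaussianVector ι {z | ∀ k, u k ⬝ᵥ z ≤ t} := by
  have := Fintype.ofFinite κ
  rw [← ENNReal.toReal_le_toReal (measure_ne_top _ _) (measure_ne_top _ _)]
  exact le_of_tendsto_of_tendsto' (tendsto_integral_prod_sigmoid t)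
    (tendsto_integral_prod_sigmoid t)
    fun n => integral_prod_sigmoid_le_of_covariance_le huv hself hle (sq_nonneg (n : ℝ)) n t

theorem gaussianVector_setOf_exists_lt_le_of_covariance_le_of_finite {κ : Type*} [Finite κ]
    {u v : κ → ι → ℝ} (huv : ∀ k l, u k ⬝ᵥ v l = 0) (hself : ∀ k, u k ⬝ᵥ u k = v k ⬝ᵥ v k)
    (hle : ∀ k l, v k ⬝ᵥ v l ≤ u k ⬝ᵥ u l) (t : ℝ) :
    gaussianVector ι {z | ∃ k, t < u k ⬝ᵥ z} ≤ gaussianVector ι {z | ∃ k, t < v k ⬝ᵥ z} := by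
  have hcompl (w : κ → ι → ℝ) : gaussianVector ι {z | ∃ k, t < w k ⬝ᵥ z} =
      1 - gaussianVector ι {z | ∀ k, w k ⬝ᵥ z ≤ t} := by
    have hclosed : IsClosed {z | ∀ k, w k ⬝ᵥ z ≤ t} := by
      simp only [Set.ofPred_forall]
      exact isClosed_iInter fun k => isClosed_le (by fun_prop) continuous_const
    rw [← prob_compl_eq_one_sub hclosed.measurableSet]
    congr 1
    ext z
    simp
  rw [hcompl, hcompl]
  exact tsub_le_tsub_left (gaussianVector_setOf_forall_le_le_of_covariance_le huv hself hle t) 1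

theorem gaussianVector_setOf_exists_lt_le_of_covariance_le {K : Type*} [TopologicalSpace K]
    [TopologicalSpace.SeparableSpace K] {u v : K → ι → ℝ} (hu : Continuous u)
    (huv : ∀ k l, u k ⬝ᵥ v l = 0) (hself : ∀ k, u k ⬝ᵥ u k = v k ⬝ᵥ v k)
    (hle : ∀ k l, v k ⬝ᵥ v l ≤ u k ⬝ᵥ u l) (t : ℝ) :
    gaussianVector ι {z | ∃ k, t < u k ⬝ᵥ z} ≤ gaussianVector ι {z | ∃ k, t < v k ⬝ᵥ z} := by
  obtain ⟨D, hD, hdense⟩ := TopologicalSpace.exists_countable_dense K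
  have := hD.to_subtype
  have hcover : {z | ∃ k, t < u k ⬝ᵥ z} ⊆ ⋃ s : Finset D, {z | ∃ k : s, t < u k ⬝ᵥ z} := by
    rintro z ⟨k, hk⟩
    have hopen : IsOpen {k | t < u k ⬝ᵥ z} := isOpen_lt continuous_const (by fun_prop)
    obtain ⟨l, hl, hlD⟩ := hdense.exists_mem_open hopen ⟨k, hk⟩
    exact Set.mem_iUnion.2 ⟨{⟨l, hl⟩}, ⟨⟨l, hl⟩, Finset.mem_singleton_self _⟩, hlD⟩
  have hmono : Monotone fun s : Finset D => {z | ∃ k : s, t < u k ⬝ᵥ z} :=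
    fun s s' hs z ⟨k, hk⟩ => ⟨⟨k, hs k.2⟩, hk⟩
  refine (measure_mono hcover).trans ?_
  rw [hmono.directed_le.measure_iUnion]
  refine iSup_le fun s => (gaussianVector_setOf_exists_lt_le_of_covariance_le_of_finite
    (fun _ _ => huv _ _) (fun _ => hself _) (fun _ _ => hle _ _) t).trans (measure_mono ?_)
  rintro z ⟨k, hk⟩
  exact ⟨k, hk⟩

end Slepian

section Chevet

variable {m n : Type*}

/-- The tensor `p ⊗ q`, as a vector indexed by pairs; its inner product with the entries of a matrix
`Z` is `⟨p, Z q⟩`. -/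
def outerProduct (p : m → ℝ) (q : n → ℝ) : m × n → ℝ := fun ij => p ij.1 * q ij.2

/-- Indices for a Gaussian matrix and a Gaussian scalar on the one hand, and two Gaussian vectors on
the other. -/
abbrev ChevetIndex (m n : Type*) := ((m × n) ⊕ Unit) ⊕ (m ⊕ n)

/-- The coefficients of the field `⟨p, Z q⟩ + x`. -/
def bilinearField (p : m → ℝ) (q : n → ℝ) : ChevetIndex m n → ℝ :=
  Sum.elim (Sum.elim (outerProduct p q) 1) 0

/-- The coefficients of the field `⟨p, g⟩ + ⟨q, h⟩`. -/
def linearField (p : m → ℝ) (q : n → ℝ) : ChevetIndex m n → ℝ :=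
  Sum.elim 0 (Sum.elim p q)

theorem continuous_bilinearField :
    Continuous fun pq : (m → ℝ) × (n → ℝ) => bilinearField pq.1 pq.2 := by
  refine continuous_pi ?_
  rintro ((ij | i) | i)
  all_goals simp only [bilinearField, outerProduct, Sum.elim_inl, Sum.elim_inr]; fun_prop

variable [Fintype m] [Fintype n]

theorem outerProduct_dotProduct (p : m → ℝ) (q : n → ℝ) (z : m × n → ℝ) :
    outerProduct p q ⬝ᵥ z = p ⬝ᵥ (Matrix.of (MeasurableEquiv.curry m n ℝ z) *ᵥ q) := by
  simp only [outerProduct, dotProduct, mulVec, Fintype.sum_prod_type, Finset.mul_sum, of_apply]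
  exact Finset.sum_congr rfl fun i _ => Finset.sum_congr rfl fun j _ => by
    change p i * q j * z (i, j) = p i * (z (i, j) * q j)
    ring

theorem outerProduct_dotProduct_outerProduct (p p' : m → ℝ) (q q' : n → ℝ) :
    outerProduct p q ⬝ᵥ outerProduct p' q' = (p ⬝ᵥ p') * (q ⬝ᵥ q') := by
  simp only [outerProduct, dotProduct, Fintype.sum_prod_type, Finset.sum_mul_sum]
  exact Finset.sum_congr rfl fun i _ => Finset.sum_congr rfl fun j _ => by ring

theorem dotProduct_le_sqrt_of_dotProduct_self_eq_one {p : m → ℝ} (hp : p ⬝ᵥ p = 1) (g : m → ℝ) :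
    p ⬝ᵥ g ≤ √(g ⬝ᵥ g) := by
  refine le_sqrt_of_sq_le ?_
  rw [← one_mul (g ⬝ᵥ g), ← hp, ← sum_sq_eq_dotProduct_self, ← sum_sq_eq_dotProduct_self]
  exact Finset.sum_mul_sq_le_sq_mul_sq Finset.univ p g

theorem dotProduct_le_one_of_dotProduct_self_eq_one {p p' : m → ℝ} (hp : p ⬝ᵥ p = 1)
    (hp' : p' ⬝ᵥ p' = 1) : p ⬝ᵥ p' ≤ 1 := by
  simpa [hp'] using dotProduct_le_sqrt_of_dotProduct_self_eq_one hp p'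

theorem measurePreserving_sumSplit_gaussianVector :
    MeasurePreserving (fun z : m ⊕ n → ℝ => (z ∘ Sum.inl, z ∘ Sum.inr)) (gaussianVector (m ⊕ n))
      ((gaussianVector m).prod (gaussianVector n)) :=
  measurePreserving_sumPiEquivProdPi _

theorem measurePreserving_curry_gaussianVector :
    MeasurePreserving (MeasurableEquiv.curry m n ℝ) (gaussianVector (m × n)) (gaussianMatrix m n) :=
  ⟨by fun_prop, map_curry_gaussianVector⟩

theorem measurePreserving_matrix_scalar_gaussianVector :
    MeasurePreserving (fun z : ChevetIndex m n → ℝ =>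
        (MeasurableEquiv.curry m n ℝ (fun ij => z (.inl (.inl ij))), z (.inl (.inr ()))))
      (gaussianVector (ChevetIndex m n)) ((gaussianMatrix m n).prod (gaussianReal 0 1)) :=
  ((measurePreserving_curry_gaussianVector.prod (measurePreserving_eval _ ())).comp
    measurePreserving_sumSplit_gaussianVector).comp
    (measurePreserving_fst.comp measurePreserving_sumSplit_gaussianVector)

theorem measurePreserving_vector_vector_gaussianVector :
    MeasurePreserving (fun z : ChevetIndex m n → ℝ =>
        ((fun i => z (.inr (.inl i))), (fun j => z (.inr (.inr j)))))
      (gaussianVector (ChevetIndex m n)) ((gaussianVector m).prod (gaussianVector n)) :=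
  measurePreserving_sumSplit_gaussianVector.comp
    (measurePreserving_snd.comp measurePreserving_sumSplit_gaussianVector)

theorem bilinearField_dotProduct (p : m → ℝ) (q : n → ℝ) (z : ChevetIndex m n → ℝ) :
    bilinearField p q ⬝ᵥ z =
      p ⬝ᵥ (Matrix.of (MeasurableEquiv.curry m n ℝ (fun ij => z (.inl (.inl ij)))) *ᵥ q) +
        z (.inl (.inr ())) := by
  rw [← outerProduct_dotProduct]
  simp [bilinearField, dotProduct]

theorem linearField_dotProduct (p : m → ℝ) (q : n → ℝ) (z : ChevetIndex m n → ℝ) :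
    linearField p q ⬝ᵥ z =
      p ⬝ᵥ (fun i => z (.inr (.inl i))) + q ⬝ᵥ (fun j => z (.inr (.inr j))) := by
  simp [linearField, dotProduct]

theorem bilinearField_dotProduct_linearField (p p' : m → ℝ) (q q' : n → ℝ) :
    bilinearField p q ⬝ᵥ linearField p' q' = 0 := by
  simp [bilinearField, linearField, dotProduct]

theorem bilinearField_dotProduct_bilinearField (p p' : m → ℝ) (q q' : n → ℝ) :
    bilinearField p q ⬝ᵥ bilinearField p' q' = (p ⬝ᵥ p') * (q ⬝ᵥ q') + 1 := by
  simp [bilinearField, sumElim_dotProduct_sumElim, outerProduct_dotProduct_outerProduct]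

theorem linearField_dotProduct_linearField (p p' : m → ℝ) (q q' : n → ℝ) :
    linearField p q ⬝ᵥ linearField p' q' = p ⬝ᵥ p' + q ⬝ᵥ q' := by
  simp [linearField, sumElim_dotProduct_sumElim]

/-- Pairs of unit vectors, the index set of the two Gaussian processes. -/
abbrev UnitVectorPair (m n : Type*) [Fintype m] [Fintype n] :=
  {pq : (m → ℝ) × (n → ℝ) // pq.1 ⬝ᵥ pq.1 = 1 ∧ pq.2 ⬝ᵥ pq.2 = 1}

theorem gaussianVector_setOf_exists_lt_bilinearField_le (t : ℝ) :
    gaussianVector (ChevetIndex m n)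
        {z | ∃ k : UnitVectorPair m n, t < bilinearField k.1.1 k.1.2 ⬝ᵥ z} ≤
      gaussianVector (ChevetIndex m n)
        {z | ∃ k : UnitVectorPair m n, t < linearField k.1.1 k.1.2 ⬝ᵥ z} := by
  refine gaussianVector_setOf_exists_lt_le_of_covariance_le
    (continuous_bilinearField.comp continuous_subtype_val)
    (fun _ _ => bilinearField_dotProduct_linearField ..) ?_ ?_ t
  · rintro ⟨⟨p, q⟩, hp, hq⟩
    simp [bilinearField_dotProduct_bilinearField, linearField_dotProduct_linearField, hp, hq]
  · rintro ⟨⟨p, q⟩, hp, hq⟩ ⟨⟨p', q'⟩, hp', hq'⟩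
    have := mul_nonneg (sub_nonneg.2 (dotProduct_le_one_of_dotProduct_self_eq_one hp hp'))
      (sub_nonneg.2 (dotProduct_le_one_of_dotProduct_self_eq_one hq hq'))
    simp only [Function.comp_apply, bilinearField_dotProduct_bilinearField,
      linearField_dotProduct_linearField]
    linarith

theorem gaussianMatrix_prod_setOf_exists_lt_le (t : ℝ) :
    ((gaussianMatrix m n).prod (gaussianReal 0 1))
        {Zx | ∃ k : UnitVectorPair m n, t < k.1.1 ⬝ᵥ (of Zx.1 *ᵥ k.1.2) + Zx.2} ≤
      ((gaussianVector m).prod (gaussianVector n))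
        {gh | t < √(gh.1 ⬝ᵥ gh.1) + √(gh.2 ⬝ᵥ gh.2)} := by
  have hopen : IsOpen {Zx : (m → n → ℝ) × ℝ |
      ∃ k : UnitVectorPair m n, t < k.1.1 ⬝ᵥ (of Zx.1 *ᵥ k.1.2) + Zx.2} := by
    simp only [Set.ofPred_exists]
    refine isOpen_iUnion fun k => isOpen_lt continuous_const ?_
    exact (continuous_const.dotProduct
      (Continuous.matrix_mulVec continuous_fst continuous_const)).add continuous_snd
  have hopen' : IsOpen {gh : (m → ℝ) × (n → ℝ) | t < √(gh.1 ⬝ᵥ gh.1) + √(gh.2 ⬝ᵥ gh.2)} :=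
    isOpen_lt continuous_const <| (continuous_fst.dotProduct continuous_fst).sqrt.add
      (continuous_snd.dotProduct continuous_snd).sqrt
  rw [← measurePreserving_matrix_scalar_gaussianVector.measure_preimage
      hopen.measurableSet.nullMeasurableSet,
    ← measurePreserving_vector_vector_gaussianVector.measure_preimage
      hopen'.measurableSet.nullMeasurableSet]
  simp only [Set.preimage_ofPred_eq, ← bilinearField_dotProduct]
  refine (gaussianVector_setOf_exists_lt_bilinearField_le t).trans (measure_mono ?_)
  rintro z ⟨⟨⟨p, q⟩, hp, hq⟩, hz⟩
  rw [linearField_dotProduct] at hz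
  exact hz.trans_le (add_le_add (dotProduct_le_sqrt_of_dotProduct_self_eq_one hp _)
    (dotProduct_le_sqrt_of_dotProduct_self_eq_one hq _))

theorem gaussianMatrix_prod_setOf_lt_largestSingularValue_add_le {d : ℕ} [NeZero d] (t : ℝ) :
    ((gaussianMatrix (Fin d) (Fin d)).prod (gaussianReal 0 1))
        {Zx | t < largestSingularValue (of Zx.1) + Zx.2} ≤
      ((gaussianVector (Fin d)).prod (gaussianVector (Fin d)))
        {gh | t < √(gh.1 ⬝ᵥ gh.1) + √(gh.2 ⬝ᵥ gh.2)} := by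
  refine (measure_mono ?_).trans (gaussianMatrix_prod_setOf_exists_lt_le t)
  rintro ⟨Z, x⟩ hZx
  obtain ⟨u, v, hu, hv, huv⟩ := exists_dotProduct_mulVec_eq_largestSingularValue (of Z)
  exact ⟨⟨(u, v), hu, hv⟩, huv ▸ hZx⟩

end Chevet

section LargestSingularValueTail

theorem lintegral_exp_le_of_forall_measure_setOf_lt_le {Ω Ω' : Type*} [MeasurableSpace Ω]
    [MeasurableSpace Ω'] {μ : Measure Ω} {ν : Measure Ω'} {f : Ω → ℝ} {g : Ω' → ℝ}
    (hf : AEMeasurable f μ) (hg : AEMeasurable g ν) (h : ∀ t, μ {x | t < f x} ≤ ν {y | t < g y})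
    {l : ℝ} (hl : 0 < l) :
    ∫⁻ x, ENNReal.ofReal (rexp (l * f x)) ∂μ ≤ ∫⁻ y, ENNReal.ofReal (rexp (l * g y)) ∂ν := by
  rw [lintegral_eq_lintegral_meas_lt _ (.of_forall fun _ => exp_nonneg _) (by fun_prop),
    lintegral_eq_lintegral_meas_lt _ (.of_forall fun _ => exp_nonneg _) (by fun_prop)]
  refine setLIntegral_mono' measurableSet_Ioi fun t (ht : 0 < t) => ?_
  simpa only [← log_lt_iff_lt_exp ht, ← div_lt_iff₀' hl] using h (log t / l)

theorem lintegral_exp_mul_add_prod {Ω Ω' : Type*} [MeasurableSpace Ω]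
    [MeasurableSpace Ω'] {μ : Measure Ω} {ν : Measure Ω'} [SFinite ν] {f : Ω → ℝ} {g : Ω' → ℝ}
    (hf : AEMeasurable f μ) (hg : AEMeasurable g ν) (l : ℝ) :
    ∫⁻ p, ENNReal.ofReal (rexp (l * (f p.1 + g p.2))) ∂(μ.prod ν) =
      (∫⁻ x, ENNReal.ofReal (rexp (l * f x)) ∂μ) * ∫⁻ y, ENNReal.ofReal (rexp (l * g y)) ∂ν := by
  simp only [mul_add, exp_add, ENNReal.ofReal_mul (exp_nonneg _)]
  exact lintegral_prod_mul (f := fun x => ENNReal.ofReal (rexp (l * f x)))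
    (g := fun y => ENNReal.ofReal (rexp (l * g y))) (by fun_prop) (by fun_prop)

theorem lintegral_exp_mul_lintegral_exp_le {Ω₁ Ω₂ Ω₃ Ω₄ : Type*} [MeasurableSpace Ω₁]
    [MeasurableSpace Ω₂] [MeasurableSpace Ω₃] [MeasurableSpace Ω₄] {μ₁ : Measure Ω₁}
    {μ₂ : Measure Ω₂} {μ₃ : Measure Ω₃} {μ₄ : Measure Ω₄} [SFinite μ₂] [SFinite μ₄]
    {f₁ : Ω₁ → ℝ} {f₂ : Ω₂ → ℝ} {f₃ : Ω₃ → ℝ} {f₄ : Ω₄ → ℝ} (hf₁ : Measurable f₁)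
    (hf₂ : Measurable f₂) (hf₃ : Measurable f₃) (hf₄ : Measurable f₄)
    (h : ∀ t, (μ₁.prod μ₂) {p | t < f₁ p.1 + f₂ p.2} ≤ (μ₃.prod μ₄) {p | t < f₃ p.1 + f₄ p.2})
    {l : ℝ} (hl : 0 < l) :
    (∫⁻ x, ENNReal.ofReal (rexp (l * f₁ x)) ∂μ₁) * ∫⁻ x, ENNReal.ofReal (rexp (l * f₂ x)) ∂μ₂ ≤
      (∫⁻ x, ENNReal.ofReal (rexp (l * f₃ x)) ∂μ₃) *
        ∫⁻ x, ENNReal.ofReal (rexp (l * f₄ x)) ∂μ₄ := by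
  rw [← lintegral_exp_mul_add_prod hf₁.aemeasurable hf₂.aemeasurable,
    ← lintegral_exp_mul_add_prod hf₃.aemeasurable hf₄.aemeasurable]
  exact lintegral_exp_le_of_forall_measure_setOf_lt_le (by fun_prop) (by fun_prop) h hl

theorem lintegral_exp_mul_gaussianReal (l : ℝ) :
    ∫⁻ x, ENNReal.ofReal (rexp (l * x)) ∂(gaussianReal 0 1) =
      ENNReal.ofReal (rexp (l ^ 2 / 2)) := by
  rw [← ofReal_integral_eq_lintegral_ofReal (integrable_exp_mul_gaussianReal l)
    (.of_forall fun _ => exp_nonneg _)]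
  simpa [mgf] using congrArg (fun F => ENNReal.ofReal (F l)) (mgf_id_gaussianReal (μ := 0) (v := 1))

theorem lintegral_exp_mul_dotProduct_self_gaussianVector {ι : Type*} [Fintype ι] {a : ℝ}
    (ha : a < 1) :
    ∫⁻ g, ENNReal.ofReal (rexp (a / 2 * (g ⬝ᵥ g))) ∂(gaussianVector ι) =
      ENNReal.ofReal (√(1 - a))⁻¹ ^ Fintype.card ι := by
  have h : ∫⁻ x, ENNReal.ofReal (rexp (a / 2 * x ^ 2)) ∂(gaussianReal 0 1) =
      ENNReal.ofReal (√(1 - a))⁻¹ := by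
    simpa [neg_div, sub_eq_add_neg] using
      lintegral_exp_neg_mul_sq_gaussianReal (neg_lt_neg_iff.2 ha)
  simp only [← sum_sq_eq_dotProduct_self, Finset.mul_sum, exp_sum,
    ENNReal.ofReal_prod_of_nonneg fun _ _ => exp_nonneg _]
  rw [lintegral_prod_gaussianVector (f := fun _ x => ENNReal.ofReal (rexp (a / 2 * x ^ 2)))
    fun _ => by fun_prop, Finset.prod_const, h, Finset.card_univ]

theorem mul_le_div_add_mul_sq_add {s l : ℝ} (hs : 0 ≤ s) (hl : 0 < l) (r : ℝ) :
    l * r ≤ l / (s + l) / 2 * r ^ 2 + l * (s + l) / 2 := by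
  have h : l / (s + l) / 2 * r ^ 2 + l * (s + l) / 2 - l * r =
      l / (2 * (s + l)) * (s + l - r) ^ 2 := by
    field_simp
    ring
  have : 0 ≤ l / (2 * (s + l)) * (s + l - r) ^ 2 := by positivity
  linarith

theorem inv_sqrt_one_sub_div_add_le_exp {s l : ℝ} (hs : 0 < s) (hl : 0 < l) :
    (√(1 - l / (s + l)))⁻¹ ≤ rexp (l / s / 2) := by
  have h : 1 - l / (s + l) = (l / s + 1)⁻¹ := by
    field_simp
    ring
  rw [h, sqrt_inv, inv_inv, sqrt_le_left (exp_nonneg _), ← exp_nat_mul]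
  convert add_one_le_exp (l / s) using 2
  push_cast
  ring

theorem lintegral_exp_mul_sqrt_dotProduct_self_gaussianVector_le {ι : Type*} [Fintype ι]
    [Nonempty ι] {l : ℝ} (hl : 0 < l) :
    ∫⁻ g, ENNReal.ofReal (rexp (l * √(g ⬝ᵥ g))) ∂(gaussianVector ι) ≤
      ENNReal.ofReal (rexp (l * √(Fintype.card ι) + l ^ 2 / 2)) := by
  have hcard : (0 : ℝ) < Fintype.card ι := Nat.cast_pos.2 Fintype.card_pos
  set s := √(Fintype.card ι : ℝ)
  have hs : 0 < s := sqrt_pos.2 hcard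
  have hs2 : s ^ 2 = Fintype.card ι := sq_sqrt hcard.le
  have ha : l / (s + l) < 1 := (div_lt_one (by positivity)).2 (lt_add_of_pos_left l hs)
  -- AM-GM bounds `l * √(g ⬝ᵥ g)`, with equality at `√(g ⬝ᵥ g) = s + l`.
  calc ∫⁻ g, ENNReal.ofReal (rexp (l * √(g ⬝ᵥ g))) ∂(gaussianVector ι)
      ≤ ∫⁻ g, ENNReal.ofReal (rexp (l / (s + l) / 2 * (g ⬝ᵥ g))) *
          ENNReal.ofReal (rexp (l * (s + l) / 2)) ∂(gaussianVector ι) := by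
        refine lintegral_mono fun g => ?_
        rw [← ENNReal.ofReal_mul (exp_nonneg _), ← exp_add]
        refine ENNReal.ofReal_le_ofReal (exp_le_exp.2 ?_)
        simpa [sq_sqrt (real_dotProduct_self_nonneg g)] using
          mul_le_div_add_mul_sq_add hs.le hl √(g ⬝ᵥ g)
    _ = ENNReal.ofReal (√(1 - l / (s + l)))⁻¹ ^ Fintype.card ι *
          ENNReal.ofReal (rexp (l * (s + l) / 2)) := by
        rw [lintegral_mul_const' _ _ ENNReal.ofReal_ne_top,
          lintegral_exp_mul_dotProduct_self_gaussianVector ha]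
    _ ≤ ENNReal.ofReal (rexp (l / s / 2)) ^ Fintype.card ι *
          ENNReal.ofReal (rexp (l * (s + l) / 2)) := by
        gcongr
        exact inv_sqrt_one_sub_div_add_le_exp hs hl
    _ = ENNReal.ofReal (rexp (l * s + l ^ 2 / 2)) := by
        rw [← ENNReal.ofReal_pow (exp_nonneg _), ← ENNReal.ofReal_mul (by positivity),
          ← exp_nat_mul, ← exp_add, ← hs2]
        congr 2
        field_simp
        ring

variable {d : ℕ} [NeZero d]

theorem lintegral_exp_mul_largestSingularValue_gaussianMatrix_le {l : ℝ} (hl : 0 < l) :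
    ∫⁻ Z, ENNReal.ofReal (rexp (l * largestSingularValue (of Z)))
        ∂(gaussianMatrix (Fin d) (Fin d)) ≤
      ENNReal.ofReal (rexp (2 * l * √d + l ^ 2 / 2)) := by
  have hσ : Measurable fun Z : Fin d → Fin d → ℝ => largestSingularValue (of Z) :=
    continuous_largestSingularValue.measurable
  have hnorm : Measurable fun g : Fin d → ℝ => √(g ⬝ᵥ g) :=
    Continuous.measurable (by fun_prop)
  have hchevet := lintegral_exp_mul_lintegral_exp_le hσ measurable_id hnorm hnorm
    gaussianMatrix_prod_setOf_lt_largestSingularValue_add_le hl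
  simp only [id, lintegral_exp_mul_gaussianReal] at hchevet
  have hmgf := lintegral_exp_mul_sqrt_dotProduct_self_gaussianVector_le (ι := Fin d) hl
  rw [Fintype.card_fin] at hmgf
  rw [← ENNReal.mul_le_mul_iff_left (c := ENNReal.ofReal (rexp (l ^ 2 / 2)))
    (by simpa using exp_pos _) ENNReal.ofReal_ne_top]
  refine (hchevet.trans (mul_le_mul' hmgf hmgf)).trans_eq ?_
  rw [← ENNReal.ofReal_mul (exp_nonneg _), ← ENNReal.ofReal_mul (exp_nonneg _), ← exp_add,
    ← exp_add]
  ring_nf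

theorem gaussianMatrix_setOf_two_mul_sqrt_add_le_largestSingularValue_le {s : ℝ} (hs : 0 < s) :
    gaussianMatrix (Fin d) (Fin d) {Z | 2 * √d + s ≤ largestSingularValue (of Z)} ≤
      ENNReal.ofReal (rexp (-(s ^ 2 / 2))) := by
  have hσ : Measurable fun Z : Fin d → Fin d → ℝ => largestSingularValue (of Z) :=
    continuous_largestSingularValue.measurable
  have hmarkov := mul_meas_ge_le_lintegral (μ := gaussianMatrix (Fin d) (Fin d))
    (f := fun Z => ENNReal.ofReal (rexp (s * largestSingularValue (of Z)))) (by fun_prop)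
    (ENNReal.ofReal (rexp (s * (2 * √d + s))))
  simp only [ENNReal.ofReal_le_ofReal_iff (exp_nonneg _), exp_le_exp, mul_le_mul_iff_right₀ hs]
    at hmarkov
  rw [← ENNReal.mul_le_mul_iff_right (a := ENNReal.ofReal (rexp (s * (2 * √d + s))))
    (by simpa using exp_pos _) ENNReal.ofReal_ne_top]
  refine (hmarkov.trans (lintegral_exp_mul_largestSingularValue_gaussianMatrix_le hs)).trans_eq ?_
  rw [← ENNReal.ofReal_mul (exp_nonneg _), ← exp_add]
  ring_nf

end LargestSingularValueTail

theorem gaussian_matrix_singular_values {d : ℕ} (hd : 1 ≤ d) (β : ℝ)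
    (hβ0 : 0 < β) (hβ1 : β < 1) :
    (Measure.pi fun _ : Fin d => Measure.pi fun _ : Fin d => gaussianReal 0 1)
        {Z | smallestSingularValue (Matrix.of Z) ≤ β / Real.sqrt d} ≤ ENNReal.ofReal β ∧
    (Measure.pi fun _ : Fin d => Measure.pi fun _ : Fin d => gaussianReal 0 1)
        {Z | largestSingularValue (Matrix.of Z) ≥
          2 * Real.sqrt d + Real.sqrt (2 * Real.log (1 / β))} ≤ ENNReal.ofReal β := by
  have : NeZero d := ⟨by lia⟩
  constructor
  · have hd0 : 0 < √(d : ℝ) := sqrt_pos.2 (Nat.cast_pos.2 hd)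
    have h := gaussianMatrix_setOf_smallestSingularValue_le_le (d := d) (β / √d)
    rwa [← ENNReal.ofReal_mul hd0.le, mul_div_cancel₀ _ hd0.ne'] at h
  · have hlog : 0 < 2 * log (1 / β) := mul_pos two_pos (log_pos (one_lt_one_div hβ0 hβ1))
    have hexp : rexp (-(√(2 * log (1 / β)) ^ 2 / 2)) = β := by
      rw [sq_sqrt hlog.le, mul_div_cancel_left₀ _ two_ne_zero, one_div, log_inv, neg_neg,
        exp_log hβ0]
    have h := gaussianMatrix_setOf_two_mul_sqrt_add_le_largestSingularValue_le (d := d)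
      (sqrt_pos.2 hlog)
    rwa [hexp] at h
end
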